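/- Let K be a Hopf subalgebra of H and C a simple subcoalgebra of H. Then {}^C K is the largest Hopf subalgebra L of H with the property LC ⊆ CK; that is, {}^C K·C ⊆ CK, and any Hopf subalgebra L of H with L·C ⊆ CK satisfies L ⊆ {}^C K. -/

import Mathlib

open TensorProduct

namespace MackeyPaper

noncomputable section

universe v

variable (k : Type) [Field k] [CharZero k] [IsAlgClosed k]
variable (H : Type) [Ring H] [HopfAlgebra k H]

/-- A subcoalgebra of `H`: a `k`-subspace `C` with `Δ(C) ⊆ C ⊗ C`. -/
def IsSubcoalgebra (C : Submodule k H) : Prop :=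
  ∀ c ∈ C, Coalgebra.comul (R := k) c ∈
    LinearMap.range (TensorProduct.map C.subtype C.subtype)

/-- A simple (nonzero, minimal) subcoalgebra of `H`. -/
def IsSimpleSubcoalgebra (C : Submodule k H) : Prop :=
  IsSubcoalgebra k H C ∧ C ≠ ⊥ ∧
    ∀ D : Submodule k H, D ≤ C → IsSubcoalgebra k H D → D ≠ ⊥ → D = C

/-- A Hopf subalgebra of `H`: a subalgebra which is a subcoalgebra and is
stable under the antipode. -/
def IsHopfSubalgebra (K : Subalgebra k H) : Prop :=
  IsSubcoalgebra k H K.toSubmodule ∧ ∀ x ∈ K, HopfAlgebra.antipode (R := k) x ∈ K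

/-- `Λ` is the (two-sided) idempotent integral of the Hopf subalgebra `K`,
i.e. the integral normalized by `ε(Λ) = 1`. -/
def IsIdempotentIntegral (K : Subalgebra k H) (Λ : H) : Prop :=
  Λ ∈ K ∧ Coalgebra.counit (R := k) Λ = 1 ∧
    ∀ x ∈ K, x * Λ = Coalgebra.counit (R := k) x • Λ ∧
      Λ * x = Coalgebra.counit (R := k) x • Λ

/-- A cocommutative element of `H`; the cocommutative elements of `H` form
the character ring `C(H^*)`. -/
def IsCocomm (x : H) : Prop :=
  (TensorProduct.comm k H H) (Coalgebra.comul (R := k) x) = Coalgebra.comul (R := k) x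

/-- The character ring `C(H^*)`, i.e. the space of cocommutative elements of `H`,
as a `k`-subspace of `H`. -/
def charRing : Submodule k H :=
  LinearMap.ker ((TensorProduct.comm k H H).toLinearMap ∘ₗ Coalgebra.comul (R := k)
      - Coalgebra.comul (R := k))

/-- `d` is the irreducible character (of `H^*`) associated to the simple
subcoalgebra `C`: the unique cocommutative element of `C` whose counit is the
positive square root of `dim_k C`. -/
def IsCharacterOf (d : H) (C : Submodule k H) : Prop :=
  d ∈ C ∧ IsCocomm k H d ∧
    Coalgebra.counit (R := k) d = ((Nat.sqrt (Module.finrank k ↥C) : ℕ) : k)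

/-- The right coset `CK` of a subcoalgebra `C`, i.e. the subspace `C·K`. -/
def CKsub (K : Subalgebra k H) (C : Submodule k H) : Submodule k H :=
  C * K.toSubmodule

/-- The conjugate Hopf subalgebra `ᶜK` of `K` by a simple subcoalgebra `C`
(with associated irreducible character `c`): the span of all simple
subcoalgebras of `H` whose irreducible character `d` satisfies
`d·c·Λ_K = ε(d)·c·Λ_K`.  (The condition is stated for all cocommutative
elements of `C` resp. `D`; this is equivalent, since the cocommutative
elements of a simple subcoalgebra are exactly the scalar multiples of its
irreducible character.) -/
def conjK (K : Subalgebra k H) (Λ : H) (C : Submodule k H) : Submodule k H :=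
  sSup {D : Submodule k H | IsSimpleSubcoalgebra k H D ∧
    ∀ d ∈ D, IsCocomm k H d → ∀ c ∈ C, IsCocomm k H c →
      d * (c * Λ) = Coalgebra.counit (R := k) d • (c * Λ)}

/-- A complete irredundant system of representatives (by simple subcoalgebras)
of the double cosets `L\H/K`.  (Taking `L = ⊥` gives a system of
representatives of the right cosets `H/K`.) -/
def IsDoubleCosetReps (L K : Subalgebra k H) {ι : Type} (rep : ι → Submodule k H) : Prop :=
  (∀ i, IsSimpleSubcoalgebra k H (rep i)) ∧
  (∀ i j, L.toSubmodule * rep i * K.toSubmodule = L.toSubmodule * rep j * K.toSubmodule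
      → i = j) ∧
  (∀ C : Submodule k H, IsSimpleSubcoalgebra k H C →
      ∃ i, C ≤ L.toSubmodule * rep i * K.toSubmodule)

section Ind

variable (K : Subalgebra k H) (M : Type v) [AddCommGroup M] [Module k M]
  [Module ↥K M] [IsScalarTower k ↥K M]

/-- The relations defining the induced module `H ⊗_K M` as a quotient of
`H ⊗_k M`: the `H`-submodule generated by the elements `a ⊗ m - 1 ⊗ a·m`
for `a ∈ K` (equivalently, spanned by all `h·a ⊗ m - h ⊗ a·m`). -/
def indRel : Submodule H (H ⊗[k] M) :=
  Submodule.span H {z | ∃ (a : ↥K) (m : M),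
    z = (a : H) ⊗ₜ[k] m - (1 : H) ⊗ₜ[k] (a • m)}

/-- The induced module `M↑_K^H = H ⊗_K M`, a left `H`-module. -/
abbrev Ind := (H ⊗[k] M) ⧸ indRel k H K M

variable (C : Submodule k H)

/-- The underlying space `CK ⊗_k M` of which the conjugate module `ᶜM` is a
quotient. -/
def CKM : Type _ := ↥(CKsub k H K C) ⊗[k] M

instance : AddCommGroup (CKM k H K M C) :=
  inferInstanceAs (AddCommGroup (↥(CKsub k H K C) ⊗[k] M))

instance : Module k (CKM k H K M C) :=
  inferInstanceAs (Module k (↥(CKsub k H K C) ⊗[k] M))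

/-- The pure tensor `x ⊗ m` as an element of `CK ⊗_k M`. -/
def ckmk (x : ↥(CKsub k H K C)) (m : M) : CKM k H K M C := x ⊗ₜ[k] m

/-- The relations defining the conjugate module `ᶜM = CK ⊗_K M` as a quotient
of `CK ⊗_k M`: `x·a ⊗ m - x ⊗ a·m` for `a ∈ K`. -/
def conjRel : Submodule k (CKM k H K M C) :=
  Submodule.span k {z | ∃ (x : ↥(CKsub k H K C)) (a : ↥K) (m : M)
    (hxa : (x : H) * (a : H) ∈ CKsub k H K C),
    z = ckmk k H K M C ⟨(x : H) * (a : H), hxa⟩ m - ckmk k H K M C x (a • m)}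

/-- The conjugate module `ᶜM := CK ⊗_K M`. -/
abbrev ConjM := CKM k H K M C ⧸ conjRel k H K M C

/-- The canonical copy of the conjugate module `ᶜM = CK ⊗_K M` inside
`H ⊗_K M` (the image of `CK ⊗_K M` under multiplication; this is indeed a
copy of `ᶜM` since `H` is a free right `K`-module and `CK` is one of the
coset summands). -/
def conjMsub : Submodule k (Ind k H K M) :=
  Submodule.span k {z | ∃ (x : H) (_ : x ∈ CKsub k H K C) (m : M),
    z = Submodule.Quotient.mk (x ⊗ₜ[k] m)}

end Ind

section Comp

variable (L K : Subalgebra k H) (Λ : H) (C : Submodule k H)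
variable (M : Type v) [AddCommGroup M] [Module k M] [Module ↥K M] [IsScalarTower k ↥K M]

/-- The underlying space `L ⊗_k (CK ⊗_k M)`. -/
def LCM : Type _ := ↥L ⊗[k] CKM k H K M C

instance : AddCommGroup (LCM k H L K C M) :=
  inferInstanceAs (AddCommGroup (↥L ⊗[k] CKM k H K M C))

instance : Module k (LCM k H L K C M) :=
  inferInstanceAs (Module k (↥L ⊗[k] CKM k H K M C))

/-- The pure tensor `l ⊗ w` as an element of `L ⊗_k (CK ⊗_k M)`. -/
def lcmk (l : ↥L) (w : CKM k H K M C) : LCM k H L K C M := l ⊗ₜ[k] w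

/-- The relations defining `L ⊗_{L ∩ ᶜK} ᶜM` as a quotient of
`L ⊗_k (CK ⊗_k M)`: the balancedness relations over `L ∩ ᶜK` (first set),
together with (the image of) the relations defining `ᶜM = CK ⊗_K M`
(second set). -/
def compRel : Submodule k (LCM k H L K C M) :=
  Submodule.span k
    ({z | ∃ (l : ↥L) (a : H) (haL : a ∈ L) (_ : a ∈ conjK k H K Λ C)
        (x : ↥(CKsub k H K C)) (m : M) (hax : a * (x : H) ∈ CKsub k H K C),
        z = lcmk k H L K C M ⟨(l : H) * a, mul_mem l.2 haL⟩ (ckmk k H K M C x m)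
          - lcmk k H L K C M l (ckmk k H K M C ⟨a * (x : H), hax⟩ m)} ∪
     {z | ∃ (l : ↥L) (x : ↥(CKsub k H K C)) (a : ↥K) (m : M)
        (hxa : (x : H) * (a : H) ∈ CKsub k H K C),
        z = lcmk k H L K C M l (ckmk k H K M C ⟨(x : H) * (a : H), hxa⟩ m)
          - lcmk k H L K C M l (ckmk k H K M C x (a • m))})

/-- The module `L ⊗_{L ∩ ᶜK} ᶜM` (a left `L`-module via multiplication on the
first tensor factor). -/
abbrev Comp := LCM k H L K C M ⧸ compRel k H L K Λ C M

end Comp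

open DirectSum

section Mackey

variable (L K : Subalgebra k H) (Λ : H)

/-- The Mackey isomorphism property for the pair `(L, K)` at the `K`-module
`M`: for any system of double coset representatives, the left-multiplication
map `⊕_C L ⊗_{L ∩ ᶜK} ᶜM → M↑_K^H↓_L^H`, `l ⊗ v ↦ l·v`, is an isomorphism of
`L`-modules.  (A `k`-linear map satisfying the displayed formula on the
spanning elements is automatically `L`-equivariant for the evident
`L`-actions, so this property is stated for `k`-linear maps.) -/
def MackeyAt (M : Type v) [AddCommGroup M] [Module k M] [Module ↥K M]
    [IsScalarTower k ↥K M] [Module.Finite k M] : Prop :=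
  ∀ (ι : Type) [DecidableEq ι] (rep : ι → Submodule k H),
    IsDoubleCosetReps k H L K rep →
    ∃ π : (⨁ i : ι, Comp k H L K Λ (rep i) M) →ₗ[k] Ind k H K M,
      Function.Bijective π ∧
      ∀ (i : ι) (l : ↥L) (x : ↥(CKsub k H K (rep i))) (m : M),
        π (DirectSum.of (fun i => Comp k H L K Λ (rep i) M) i
            (Submodule.Quotient.mk (lcmk k H L K (rep i) M l (ckmk k H K M (rep i) x m)))) =
          Submodule.Quotient.mk (((l : H) * (x : H)) ⊗ₜ[k] m)

/-- `(L, K)` is a Mackey pair of Hopf subalgebras of `H` (here `Λ` is the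
idempotent integral of `K`): for every finite-dimensional `K`-module `M` the
left-multiplication homomorphism `π_M` is an isomorphism. -/
def IsMackeyPair : Prop :=
  ∀ (M : Type v) [AddCommGroup M] [Module k M] [Module ↥K M]
    [IsScalarTower k ↥K M] [Module.Finite k M], MackeyAt k H L K Λ M

end Mackey


end

end MackeyPaper

/-!
A semisimple `H` has a two-sided integral `Λ` with `ε(Λ) = 1`, and `τ(h) = Tr(x ↦ h S²(x))` is a
left integral on `H` with `τ(Λ) = 1`. By Radford's formula `S⁴` is conjugation by the grouplike
element `τ(Λ₁)Λ₂`. On the matrix blocks of `H` the automorphism `S²` acts by conjugation by units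
`uᵢ`, and the Larson-Radford positivity argument gives `τ(1) = Tr S² = ∑ Tr(uᵢ) Tr(uᵢ⁻¹) ≠ 0`;
hence `S⁴ = 1` and `τ / τ(1)` is a Haar functional `l`. If `n = dim H` and `G` is the action of the
idempotent `χ / n`, with `χ` the regular character, then `n Tr(G S²) = Tr S²`; as the traces
involved are integers and `S²` is an involution, this forces `S² = 1`.

With `l` and `S² = 1` every subcoalgebra `E` acquires a support functional `u`, equal to `ε` on `E`
and with `h₁u(h₂)`, `u(h₁)h₂` in `E` for all `h`. In particular subcoalgebras are sums of simple
ones.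

For `ᶜK C ⊆ CK`, let `e = ε - u` with `u` the support functional of `CK`. Then `e(hx) = ε(x)e(h)`
for `x ∈ K`. If `m` and `n` are the matrix coefficients of a simple `D ⊆ ᶜK` and of `C`, the matrix
of all `e(mᵢⱼ nₚₛ)` is idempotent with trace `e(dc) = e(dcΛ) = ε(d)e(cΛ) = 0`, so it vanishes and
`DC ⊆ CK`.

Conversely let `DC ⊆ CK`. For a functional `f` with `f(hx) = f(h)ε(x)` for `x ∈ K`, the average
`h ↦ l(h₁ S(h₃)) f(h₂)` is central in `H*`, hence a multiple of `ε` on the simple subcoalgebra `C`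
and therefore on `CK`; it agrees with `f` on characters. Thus `f(dc) = ε(d)f(c)`, and taking
`f = φ(· Λ)` for all `φ` gives `dcΛ = ε(d)cΛ`.
-/

namespace MackeyPaper

noncomputable section

open Coalgebra HopfAlgebra

section HitActions

variable {R : Type*} [CommSemiring R]

section Eval

variable {M N : Type*} [AddCommMonoid M] [Module R M] [AddCommMonoid N] [Module R N]

/-- The partial evaluation `a ⊗ b ↦ f(a) b` of a functional on the first tensor factor. -/
def evalFst (f : M →ₗ[R] R) : M ⊗[R] N →ₗ[R] N :=
  (TensorProduct.lid R N).toLinearMap ∘ₗ f.rTensor N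

/-- The partial evaluation `a ⊗ b ↦ f(b) a` of a functional on the second tensor factor. -/
def evalSnd (f : N →ₗ[R] R) : M ⊗[R] N →ₗ[R] M :=
  (TensorProduct.rid R M).toLinearMap ∘ₗ f.lTensor M

@[simp] theorem evalFst_tmul (f : M →ₗ[R] R) (a : M) (b : N) :
    evalFst f (a ⊗ₜ[R] b) = f a • b := by
  simp [evalFst]

@[simp] theorem evalSnd_tmul (f : N →ₗ[R] R) (a : M) (b : N) :
    evalSnd f (a ⊗ₜ[R] b) = f b • a := by
  simp [evalSnd]

theorem apply_evalSnd (f : M →ₗ[R] R) (g : N →ₗ[R] R) (z : M ⊗[R] N) :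
    f (evalSnd g z) = g (evalFst f z) := by
  induction z with
  | zero => simp
  | add x y hx hy => simp only [map_add, hx, hy]
  | tmul x y => simp [mul_comm]

theorem evalSnd_rTensor {M' : Type*} [AddCommMonoid M'] [Module R M'] (g : M →ₗ[R] M')
    (f : N →ₗ[R] R) (z : M ⊗[R] N) : evalSnd f (g.rTensor N z) = g (evalSnd f z) := by
  induction z with
  | zero => simp
  | add x y hx hy => simp only [map_add, hx, hy]
  | tmul x y => simp

theorem evalFst_lTensor {N' : Type*} [AddCommMonoid N'] [Module R N'] (g : N →ₗ[R] N')
    (f : M →ₗ[R] R) (z : M ⊗[R] N) : evalFst f (g.lTensor M z) = g (evalFst f z) := by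
  induction z with
  | zero => simp
  | add x y hx hy => simp only [map_add, hx, hy]
  | tmul x y => simp

theorem evalSnd_mem {E : Submodule R M} {z : M ⊗[R] M}
    (hz : z ∈ LinearMap.range (TensorProduct.map E.subtype E.subtype)) (f : M →ₗ[R] R) :
    evalSnd f z ∈ E := by
  obtain ⟨w, rfl⟩ := hz
  induction w with
  | zero => simp
  | add x y hx hy => simpa only [map_add] using add_mem hx hy
  | tmul x y => simpa using E.smul_mem _ x.2

theorem evalFst_mem {E : Submodule R M} {z : M ⊗[R] M}
    (hz : z ∈ LinearMap.range (TensorProduct.map E.subtype E.subtype)) (f : M →ₗ[R] R) :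
    evalFst f z ∈ E := by
  obtain ⟨w, rfl⟩ := hz
  induction w with
  | zero => simp
  | add x y hx hy => simpa only [map_add] using add_mem hx hy
  | tmul x y => simpa using E.smul_mem _ y.2

theorem eq_sum_evalSnd_tmul {ι : Type*} [Fintype ι] {E : Submodule R M}
    (b : Module.Basis ι R E) {β : ι → M →ₗ[R] R} (hβ : ∀ i (x : E), β i x = b.repr x i)
    {z : M ⊗[R] M} (hz : z ∈ LinearMap.range (TensorProduct.map E.subtype E.subtype)) :
    z = ∑ p, evalSnd (β p) z ⊗ₜ[R] (b p : M) := by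
  obtain ⟨w, rfl⟩ := hz
  induction w with
  | zero => simp
  | add x y hx hy =>
    conv_lhs => rw [map_add, hx, hy]
    simp only [map_add, TensorProduct.add_tmul, Finset.sum_add_distrib]
  | tmul x y =>
    have hy : (y : M) = ∑ p, b.repr y p • (b p : M) := by
      conv_lhs => rw [← b.sum_repr y]
      simp only [Submodule.coe_sum, Submodule.coe_smul]
    simp only [TensorProduct.map_tmul, evalSnd_tmul, Submodule.subtype_apply, hβ,
      TensorProduct.smul_tmul, ← TensorProduct.tmul_sum, ← hy]

end Eval

section EvalMul

variable {A : Type*} [Semiring A] [Algebra R A]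

theorem evalSnd_mul_tmul (f : A →ₗ[R] R) (z : A ⊗[R] A) (a b : A) :
    evalSnd f (z * a ⊗ₜ[R] b) = evalSnd (f ∘ₗ LinearMap.mulRight R b) z * a := by
  induction z with
  | zero => simp
  | add x y hx hy => simp only [add_mul, map_add, hx, hy]
  | tmul x y => simp

theorem evalSnd_tmul_mul (f : A →ₗ[R] R) (z : A ⊗[R] A) (a b : A) :
    evalSnd f (a ⊗ₜ[R] b * z) = a * evalSnd (f ∘ₗ LinearMap.mulLeft R b) z := by
  induction z with
  | zero => simp
  | add x y hx hy => simp only [mul_add, map_add, hx, hy]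
  | tmul x y => simp

theorem evalFst_mul_tmul (f : A →ₗ[R] R) (z : A ⊗[R] A) (a b : A) :
    evalFst f (z * a ⊗ₜ[R] b) = evalFst (f ∘ₗ LinearMap.mulRight R a) z * b := by
  induction z with
  | zero => simp
  | add x y hx hy => simp only [add_mul, map_add, hx, hy]
  | tmul x y => simp

theorem evalFst_tmul_mul (f : A →ₗ[R] R) (z : A ⊗[R] A) (a b : A) :
    evalFst f (a ⊗ₜ[R] b * z) = b * evalFst (f ∘ₗ LinearMap.mulLeft R a) z := by
  induction z with
  | zero => simp
  | add x y hx hy => simp only [mul_add, map_add, hx, hy]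
  | tmul x y => simp

end EvalMul

variable {A : Type*} [AddCommMonoid A] [Module R A] [Coalgebra R A]

/-- The left hit action `f ⇀ h = h₁ f(h₂)` of a functional on a coalgebra, as an operator
in `h`. -/
def hitLeft (f : A →ₗ[R] R) : A →ₗ[R] A := evalSnd f ∘ₗ comul

/-- The right hit action `h ↼ f = f(h₁) h₂` of a functional on a coalgebra, as an operator
in `h`. -/
def hitRight (f : A →ₗ[R] R) : A →ₗ[R] A := evalFst f ∘ₗ comul

theorem evalSnd_comul (f : A →ₗ[R] R) (h : A) : evalSnd f (comul h) = hitLeft f h := rfl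

theorem evalFst_comul (f : A →ₗ[R] R) (h : A) : evalFst f (comul h) = hitRight f h := rfl

theorem apply_hitLeft (f g : A →ₗ[R] R) (h : A) : f (hitLeft g h) = g (hitRight f h) :=
  apply_evalSnd f g (comul h)

@[simp] theorem hitLeft_counit : hitLeft (counit (R := R) (A := A)) = LinearMap.id := by
  ext h
  simp [hitLeft, evalSnd]

@[simp] theorem hitRight_counit : hitRight (counit (R := R) (A := A)) = LinearMap.id := by
  ext h
  simp [hitRight, evalFst]

@[simp] theorem counit_hitLeft (f : A →ₗ[R] R) (h : A) : counit (R := R) (hitLeft f h) = f h := by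
  rw [apply_hitLeft, hitRight_counit, LinearMap.id_apply]

@[simp] theorem counit_hitRight (f : A →ₗ[R] R) (h : A) :
    counit (R := R) (hitRight f h) = f h := by
  rw [← apply_hitLeft, hitLeft_counit, LinearMap.id_apply]

@[simp] theorem hitLeft_zero : hitLeft (0 : A →ₗ[R] R) = 0 := by
  simp [hitLeft, evalSnd]

theorem hitLeft_smul (r : R) (f : A →ₗ[R] R) : hitLeft (r • f) = r • hitLeft f := by
  ext h
  simp [hitLeft, evalSnd, LinearMap.lTensor_smul]

theorem hitRight_smul (r : R) (f : A →ₗ[R] R) : hitRight (r • f) = r • hitRight f := by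
  ext h
  simp [hitRight, evalFst, LinearMap.rTensor_smul]

theorem comul_hitLeft (f : A →ₗ[R] R) (h : A) :
    comul (R := R) (hitLeft f h) = (hitLeft f).lTensor A (comul h) := by
  have key (z : A ⊗[R] A) : evalSnd f ((TensorProduct.assoc R A A A).symm (comul.lTensor A z)) =
      (hitLeft f).lTensor A z := by
    induction z with
    | zero => simp
    | add x y hx hy => simp only [map_add, hx, hy]
    | tmul x y =>
      simp only [LinearMap.lTensor_tmul, ← evalSnd_comul]
      induction comul (R := R) y with
      | zero => simp
      | add x y hx hy => simp only [map_add, TensorProduct.tmul_add, hx, hy]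
      | tmul a b => simp
  rw [← key, ← coassoc_apply, LinearEquiv.symm_apply_apply, evalSnd_rTensor, evalSnd_comul]

theorem comul_hitRight (f : A →ₗ[R] R) (h : A) :
    comul (R := R) (hitRight f h) = (hitRight f).rTensor A (comul h) := by
  have key (z : A ⊗[R] A) : evalFst f (TensorProduct.assoc R A A A (comul.rTensor A z)) =
      (hitRight f).rTensor A z := by
    induction z with
    | zero => simp
    | add x y hx hy => simp only [map_add, hx, hy]
    | tmul x y =>
      simp only [LinearMap.rTensor_tmul, ← evalFst_comul]
      induction comul (R := R) x with
      | zero => simp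
      | add x y hx hy => simp only [map_add, TensorProduct.add_tmul, hx, hy]
      | tmul a b => simp [TensorProduct.smul_tmul']
  rw [← key, coassoc_apply, evalFst_lTensor, evalFst_comul]

theorem hitLeft_hitLeft (f g : A →ₗ[R] R) (h : A) :
    hitLeft g (hitLeft f h) = hitLeft (g ∘ₗ hitLeft f) h := by
  rw [← evalSnd_comul, comul_hitLeft, ← evalSnd_comul]
  simp [evalSnd, LinearMap.lTensor_comp]

theorem hitLeft_hitRight (f g : A →ₗ[R] R) (h : A) :
    hitLeft g (hitRight f h) = hitRight f (hitLeft g h) := by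
  rw [← evalSnd_comul, comul_hitRight, evalSnd_rTensor, evalSnd_comul]

end HitActions

section Comatrix

variable {R A : Type*} [CommSemiring R] [AddCommMonoid A] [Module R A] [Coalgebra R A]
variable {ι : Type*} [Fintype ι] [DecidableEq ι]

variable (R) in
/-- A multiplicative matrix over a coalgebra: `Δ(mᵢⱼ) = ∑ₗ mᵢₗ ⊗ mₗⱼ` and `ε(mᵢⱼ) = δᵢⱼ`.
The entries of such matrices span every finite-dimensional coalgebra, so that a computation
with matrices takes the place of one in Sweedler notation. -/
structure IsComatrix (m : Matrix ι ι A) : Prop where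
  comul_apply (i j : ι) : comul (R := R) (m i j) = ∑ l, m i l ⊗ₜ[R] m l j
  counit_apply (i j : ι) : counit (R := R) (m i j) = if i = j then 1 else 0

namespace IsComatrix

theorem hitLeft_apply {m : Matrix ι ι A} (hm : IsComatrix R m) (f : A →ₗ[R] R) (i j : ι) :
    hitLeft f (m i j) = ∑ l, f (m l j) • m i l := by
  simp [hitLeft, hm.comul_apply]

theorem hitRight_apply {m : Matrix ι ι A} (hm : IsComatrix R m) (f : A →ₗ[R] R) (i j : ι) :
    hitRight f (m i j) = ∑ l, f (m i l) • m l j := by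
  simp [hitRight, hm.comul_apply]

end IsComatrix

theorem isComatrix_of_comul {b : ι → A} {β : ι → A →ₗ[R] R}
    (hβ : ∀ i j, β i (b j) = if j = i then 1 else 0) {n : Matrix ι ι A}
    (hn : ∀ q, comul (R := R) (b q) = ∑ p, n q p ⊗ₜ[R] b p) : IsComatrix R n := by
  have evalSnd_sum {M : Type _} [AddCommMonoid M] [Module R M] (z : ι → M) (p : ι) :
      evalSnd (β p) (∑ l, z l ⊗ₜ[R] b l) = z p := by
    simp [hβ]
  have hitLeft_b (p q : ι) : hitLeft (β p) (b q) = n q p := by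
    rw [← evalSnd_comul, hn, evalSnd_sum]
  refine ⟨fun i j => ?_, fun i j => ?_⟩
  · rw [← hitLeft_b, comul_hitLeft, hn]
    simp [hitLeft_b]
  · rw [← hitLeft_b, counit_hitLeft, hβ]

end Comatrix

section SpannedByComatrices

variable {k A : Type*} [Field k] [AddCommGroup A] [Module k A] [Coalgebra k A]

theorem exists_isComatrix_span {E : Submodule k A} [FiniteDimensional k E]
    (hE : ∀ c ∈ E, comul (R := k) c ∈ LinearMap.range (TensorProduct.map E.subtype E.subtype)) :
    ∃ (d : ℕ) (n : Matrix (Fin d) (Fin d) A), IsComatrix k n ∧ (∀ i j, n i j ∈ E) ∧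
      E = Submodule.span k (Set.range (Function.uncurry n)) := by
  let b := Module.finBasis k E
  choose β hβ using fun i => LinearMap.exists_extend (b.coord i)
  have hβ (i) (x : E) : β i x = b.repr x i := LinearMap.congr_fun (hβ i) x
  let n : Matrix (Fin _) (Fin _) A := .of fun q p => hitLeft (β p) (b q)
  have comul_b (q) : comul (R := k) (b q : A) = ∑ p, n q p ⊗ₜ[k] (b p : A) :=
    eq_sum_evalSnd_tmul b hβ (hE _ (b q).2)
  have n_mem (q p) : n q p ∈ E := evalSnd_mem (hE _ (b q).2) _
  have b_eq (q) : (b q : A) = ∑ p, counit (R := k) (b p : A) • n q p := by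
    conv_lhs => rw [← LinearMap.id_apply (R := k) (b q : A), ← hitLeft_counit, ← evalSnd_comul,
      comul_b]
    simp
  refine ⟨_, n, isComatrix_of_comul (b := fun i => (b i : A)) (β := β) (fun i j => ?_) comul_b,
    n_mem, le_antisymm (fun x hx => ?_) (Submodule.span_le.2 ?_)⟩
  · rw [hβ, b.repr_self, Finsupp.single_apply]
  · have hx' : x = ∑ i, b.repr ⟨x, hx⟩ i • (b i : A) := by
      simpa only [Submodule.coe_sum, Submodule.coe_smul] using
        (congr_arg Subtype.val (b.sum_repr ⟨x, hx⟩)).symm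
    rw [hx']
    refine sum_mem fun i _ => Submodule.smul_mem _ _ ?_
    rw [b_eq]
    exact sum_mem fun p _ => Submodule.smul_mem _ _ (Submodule.subset_span ⟨(i, p), rfl⟩)
  · rintro _ ⟨⟨i, j⟩, rfl⟩
    exact n_mem i j

theorem le_of_forall_isComatrix {E F : Submodule k A} [FiniteDimensional k E]
    (hE : ∀ c ∈ E, comul (R := k) c ∈ LinearMap.range (TensorProduct.map E.subtype E.subtype))
    (h : ∀ (d : ℕ) (m : Matrix (Fin d) (Fin d) A), IsComatrix k m → (∀ i j, m i j ∈ E) →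
      ∀ i j, m i j ∈ F) : E ≤ F := by
  obtain ⟨d, n, hn, hnE, rfl⟩ := exists_isComatrix_span hE
  rw [Submodule.span_le]
  rintro _ ⟨⟨i, j⟩, rfl⟩
  exact h d n hn hnE i j

theorem mem_of_forall_isComatrix [FiniteDimensional k A] {F : Submodule k A}
    (h : ∀ (d : ℕ) (m : Matrix (Fin d) (Fin d) A), IsComatrix k m → ∀ i j, m i j ∈ F) (x : A) :
    x ∈ F := by
  have htop : ∀ c ∈ (⊤ : Submodule k A), comul (R := k) c ∈ LinearMap.range
      (TensorProduct.map (⊤ : Submodule k A).subtype (⊤ : Submodule k A).subtype) := fun c _ =>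
    TensorProduct.map_surjective (fun x => ⟨⟨x, trivial⟩, rfl⟩) (fun x => ⟨⟨x, trivial⟩, rfl⟩) _
  exact le_of_forall_isComatrix htop (fun d m hm _ => h d m hm) trivial

theorem linearMap_ext_isComatrix [FiniteDimensional k A] {M : Type*} [AddCommGroup M]
    [Module k M] {f g : A →ₗ[k] M} (h : ∀ (d : ℕ) (m : Matrix (Fin d) (Fin d) A),
      IsComatrix k m → ∀ i j, f (m i j) = g (m i j)) : f = g :=
  LinearMap.ext (mem_of_forall_isComatrix (F := LinearMap.eqLocus f g) h)

end SpannedByComatrices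

section Antipode

section Comatrix

variable {R H : Type*} [CommSemiring R] [Semiring H] [HopfAlgebra R H]
variable {ι : Type*} [Fintype ι] [DecidableEq ι]

namespace IsComatrix

theorem sum_antipode_mul {m : Matrix ι ι H} (hm : IsComatrix R m) (i j : ι) :
    ∑ l, antipode R (m i l) * m l j = if i = j then 1 else 0 := by
  have h := mul_antipode_rTensor_comul_apply (R := R) (m i j)
  simpa [hm.comul_apply, hm.counit_apply, apply_ite (algebraMap R H)] using h

theorem sum_mul_antipode {m : Matrix ι ι H} (hm : IsComatrix R m) (i j : ι) :
    ∑ l, m i l * antipode R (m l j) = if i = j then 1 else 0 := by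
  have h := mul_antipode_lTensor_comul_apply (R := R) (m i j)
  simpa [hm.comul_apply, hm.counit_apply, apply_ite (algebraMap R H)] using h

theorem sum_antipode_tmul_one_mul_comul {m : Matrix ι ι H} (hm : IsComatrix R m) (i j : ι) :
    ∑ l, (antipode R (m i l) ⊗ₜ[R] (1 : H)) * comul (m l j) = 1 ⊗ₜ[R] m i j := by
  simp only [hm.comul_apply, Finset.mul_sum, Algebra.TensorProduct.tmul_mul_tmul, one_mul]
  rw [Finset.sum_comm]
  simp [← TensorProduct.sum_tmul, hm.sum_antipode_mul, TensorProduct.ite_tmul]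

theorem sum_comul_mul_one_tmul_antipode {m : Matrix ι ι H} (hm : IsComatrix R m) (i j : ι) :
    ∑ l, comul (m i l) * ((1 : H) ⊗ₜ[R] antipode R (m l j)) = m i j ⊗ₜ[R] 1 := by
  simp only [hm.comul_apply, Finset.sum_mul, Algebra.TensorProduct.tmul_mul_tmul, mul_one]
  rw [Finset.sum_comm]
  simp [← TensorProduct.tmul_sum, hm.sum_mul_antipode, TensorProduct.tmul_ite]

-- Both sides are the inverse of the matrix `(Δ(mᵢⱼ))` over `H ⊗ H`.
theorem comul_antipode {m : Matrix ι ι H} (hm : IsComatrix R m) (i j : ι) :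
    comul (R := R) (antipode R (m i j)) =
      ∑ l, antipode R (m l j) ⊗ₜ[R] antipode R (m i l) := by
  let Δ : H →ₐ[R] H ⊗[R] H := Bialgebra.comulAlgHom R H
  let A : Matrix ι ι (H ⊗[R] H) := m.map Δ
  let X : Matrix ι ι (H ⊗[R] H) := (m.map (antipode R)).map Δ
  let Y : Matrix ι ι (H ⊗[R] H) :=
    .of fun i j => ∑ l, antipode R (m l j) ⊗ₜ[R] antipode R (m i l)
  have hXA : X * A = 1 := by
    ext i j
    have h := congr_arg Δ (hm.sum_antipode_mul i j)
    simpa [X, A, Matrix.mul_apply, Matrix.one_apply, apply_ite Δ] using h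
  have hAY : A * Y = 1 := by
    ext i j
    calc (A * Y) i j = ∑ l, (∑ p, comul (m i p) * (1 ⊗ₜ[R] antipode R (m p l))) *
          (antipode R (m l j) ⊗ₜ[R] 1) := by
          simp only [A, Y, Matrix.mul_apply, Matrix.map_apply, Matrix.of_apply, Finset.mul_sum,
            Finset.sum_mul, mul_assoc, Algebra.TensorProduct.tmul_mul_tmul, one_mul, mul_one, Δ,
            Bialgebra.comulAlgHom_apply]
          exact Finset.sum_comm
      _ = (1 : Matrix ι ι (H ⊗[R] H)) i j := by
          simp only [hm.sum_comul_mul_one_tmul_antipode, Algebra.TensorProduct.tmul_mul_tmul,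
            mul_one, ← TensorProduct.sum_tmul, hm.sum_mul_antipode, TensorProduct.ite_tmul,
            Matrix.one_apply, Algebra.TensorProduct.one_def]
  simpa [X, Y, Δ] using congr_fun₂ (left_inv_eq_right_inv hXA hAY : X = Y) i j

end IsComatrix

variable (R H) in
/-- The square `S²` of the antipode, bundled as an algebra endomorphism. -/
def antipodeSq : H →ₐ[R] H :=
  AlgHom.ofLinearMap (antipode R ∘ₗ antipode R) (by simp [antipode_one])
    fun x y => by simp [antipode_mul_antidistrib]

theorem antipodeSq_apply (h : H) : antipodeSq R H h = antipode R (antipode R h) := rfl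

theorem IsComatrix.sum_antipodeSq_mul_antipode {m : Matrix ι ι H} (hm : IsComatrix R m)
    (i j : ι) : ∑ l, antipodeSq R H (m l j) * antipode R (m i l) = if i = j then 1 else 0 := by
  have h := congr_arg (antipode R) (hm.sum_mul_antipode i j)
  simpa [antipode_mul_antidistrib, apply_ite (antipode R (A := H)), antipodeSq_apply,
    antipode_one] using h

end Comatrix

variable {k H : Type*} [Field k] [Ring H] [HopfAlgebra k H] [FiniteDimensional k H]

theorem comul_antipode (h : H) : comul (R := k) (antipode k h) =
    TensorProduct.map (antipode k) (antipode k) (TensorProduct.comm k H H (comul h)) := by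
  suffices comul ∘ₗ antipode k (A := H) = TensorProduct.map (antipode k) (antipode k) ∘ₗ
      (TensorProduct.comm k H H).toLinearMap ∘ₗ comul from LinearMap.congr_fun this h
  refine linearMap_ext_isComatrix fun d m hm i j => ?_
  simp [hm.comul_apply, hm.comul_antipode]

theorem comul_antipodeSq (h : H) : comul (R := k) (antipodeSq k H h) =
    TensorProduct.map (antipodeSq k H).toLinearMap (antipodeSq k H).toLinearMap (comul h) := by
  simp only [antipodeSq_apply, comul_antipode]
  induction comul (R := k) h with
  | zero => simp
  | add x y hx hy => simp only [map_add, hx, hy]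
  | tmul x y => simp [antipodeSq_apply]

theorem antipode_hitRight (f : H →ₗ[k] k) (h : H) :
    antipode k (hitRight (f ∘ₗ antipode k) h) = hitLeft f (antipode k h) := by
  rw [← evalFst_comul, ← evalSnd_comul, comul_antipode]
  induction comul (R := k) h with
  | zero => simp
  | add x y hx hy => simp only [map_add, hx, hy]
  | tmul x y => simp

end Antipode

section NormalizedIntegral

theorem exists_mul_eq_smul_of_isSemisimpleRing {R A : Type*} [CommRing R] [Ring A] [Algebra R A]
    [IsSemisimpleRing A] (ε : A →ₐ[R] R) : ∃ e : A, ε e = 1 ∧ ∀ a, a * e = ε a • e := by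
  obtain ⟨J, hJ⟩ := exists_isCompl (RingHom.ker ε)
  have one_mem : (1 : A) ∈ RingHom.ker ε ⊔ J := hJ.sup_eq_top ▸ Submodule.mem_top
  obtain ⟨x, hx, e, he, hxe⟩ := Submodule.mem_sup.1 one_mem
  refine ⟨e, ?_, fun a => ?_⟩
  · simpa [RingHom.mem_ker.1 hx] using congr_arg ε hxe
  · have h : (a - algebraMap R A (ε a)) * e ∈ RingHom.ker ε ⊓ J :=
      ⟨(RingHom.ker ε).mul_mem_right _ (by simp [RingHom.mem_ker]), J.smul_mem _ he⟩
    rw [hJ.inf_eq_bot, Submodule.mem_bot, sub_mul, sub_eq_zero] at h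
    rw [h, Algebra.smul_def]

variable {R H : Type*} [CommRing R] [Ring H] [HopfAlgebra R H]

variable (R) in
/-- A two-sided integral `Λ` in a Hopf algebra, normalized by `ε(Λ) = 1`. -/
structure IsNormalizedIntegral (Λ : H) : Prop where
  counit_eq : counit (R := R) Λ = 1
  mul_left (h : H) : h * Λ = counit (R := R) h • Λ
  mul_right (h : H) : Λ * h = counit (R := R) h • Λ

variable (R H) in
theorem exists_isNormalizedIntegral [IsSemisimpleRing H] :
    ∃ Λ : H, IsNormalizedIntegral R Λ := by
  let ε := Bialgebra.counitAlgHom R H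
  obtain ⟨Λ, hΛ, hl⟩ := exists_mul_eq_smul_of_isSemisimpleRing ε
  obtain ⟨Λ', hΛ', hr⟩ := exists_mul_eq_smul_of_isSemisimpleRing
    (ε.fromOpposite fun _ _ => Commute.all _ _)
  have hr (h : H) : Λ'.unop * h = ε h • Λ'.unop := congr_arg MulOpposite.unop (hr (.op h))
  have heq : Λ = Λ'.unop := by
    have h := (hl Λ'.unop).symm.trans (hr Λ)
    rwa [show ε Λ'.unop = 1 from hΛ', hΛ, one_smul, one_smul] at h
  exact ⟨Λ, hΛ, hl, fun h => heq ▸ hr h⟩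

/-- A left integral `f` on a Hopf algebra, that is, in its dual: `h₁ f(h₂) = f(h) 1`. -/
def IsLeftIntegral (f : H →ₗ[R] R) : Prop := ∀ h, hitLeft f h = f h • (1 : H)

/-- A right integral `f` on a Hopf algebra, that is, in its dual: `f(h₁) h₂ = f(h) 1`. -/
def IsRightIntegral (f : H →ₗ[R] R) : Prop := ∀ h, hitRight f h = f h • (1 : H)

theorem IsLeftIntegral.smul {f : H →ₗ[R] R} (hf : IsLeftIntegral f) (r : R) :
    IsLeftIntegral (r • f) := fun h => by
  rw [hitLeft_smul, LinearMap.smul_apply, hf, LinearMap.smul_apply, smul_assoc]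

theorem IsRightIntegral.smul {f : H →ₗ[R] R} (hf : IsRightIntegral f) (r : R) :
    IsRightIntegral (r • f) := fun h => by
  rw [hitRight_smul, LinearMap.smul_apply, hf, LinearMap.smul_apply, smul_assoc]

end NormalizedIntegral

section AntipodeSqTrace

variable {k H : Type*} [Field k] [Ring H] [HopfAlgebra k H]

variable (k H) in
/-- The functional `h ↦ Tr(x ↦ h S²(x))`, a left integral on any finite-dimensional Hopf
algebra. -/
def antipodeSqTrace : H →ₗ[k] k :=
  LinearMap.trace k H ∘ₗ LinearMap.lcomp k H (antipodeSq k H).toLinearMap ∘ₗ LinearMap.mul k H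

theorem antipodeSqTrace_apply (h : H) : antipodeSqTrace k H h =
    LinearMap.trace k H (LinearMap.mulLeft k h ∘ₗ (antipodeSq k H).toLinearMap) := rfl

theorem antipodeSqTrace_mul (x y : H) :
    antipodeSqTrace k H (x * y) = antipodeSqTrace k H (y * antipodeSq k H x) := by
  have hxy : LinearMap.mulLeft k (x * y) ∘ₗ (antipodeSq k H).toLinearMap =
      LinearMap.mulLeft k x * (LinearMap.mulLeft k y ∘ₗ (antipodeSq k H).toLinearMap) := by
    ext z; simp
  have hyx : LinearMap.mulLeft k (y * antipodeSq k H x) ∘ₗ (antipodeSq k H).toLinearMap =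
      (LinearMap.mulLeft k y ∘ₗ (antipodeSq k H).toLinearMap) * LinearMap.mulLeft k x := by
    ext z; simp
  rw [antipodeSqTrace_apply, antipodeSqTrace_apply, hxy, hyx, LinearMap.trace_mul_comm]

theorem antipodeSqTrace_antipodeSq (x : H) :
    antipodeSqTrace k H (antipodeSq k H x) = antipodeSqTrace k H x := by
  simpa using (antipodeSqTrace_mul x (1 : H)).symm

theorem hitRight_comp_mulRight (f : H →ₗ[k] k) (y h : H) :
    hitRight (f ∘ₗ LinearMap.mulRight k y) h = evalFst f (comul h * y ⊗ₜ[k] (1 : H)) := by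
  rw [evalFst_mul_tmul, mul_one, evalFst_comul]

theorem sum_smul_hitRight_comp_mulRight {ι : Type*} [Fintype ι] (b : Module.Basis ι k H)
    (f : H →ₗ[k] k) (y h : H) :
    ∑ i, b.repr y i • hitRight (f ∘ₗ LinearMap.mulRight k (b i)) h =
      hitRight (f ∘ₗ LinearMap.mulRight k y) h := by
  conv_rhs => rw [hitRight_comp_mulRight, ← b.sum_repr y, TensorProduct.sum_tmul, Finset.mul_sum]
  simp only [hitRight_comp_mulRight, ← TensorProduct.smul_tmul', mul_smul_comm, map_sum, map_smul]

theorem sum_smul_hitRight_coord_comp_antipode {ι : Type*} [Fintype ι] (b : Module.Basis ι k H)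
    (f : H →ₗ[k] k) (y h : H) :
    ∑ i, f (y * b i) • hitRight (b.coord i ∘ₗ antipode k) h =
      hitRight (f ∘ₗ LinearMap.mulLeft k y ∘ₗ antipode k) h := by
  simp only [← evalFst_comul]
  induction comul (R := k) h with
  | zero => simp
  | add u v hu hv => simp only [map_add, smul_add, Finset.sum_add_distrib, hu, hv]
  | tmul u v =>
    have hu : f (y * antipode k u) = ∑ i, f (y * b i) * b.repr (antipode k u) i := by
      conv_lhs => rw [← b.sum_repr (antipode k u)]
      simp only [Finset.mul_sum, mul_smul_comm, map_sum, map_smul, smul_eq_mul, mul_comm]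
    simp [hu, Finset.sum_smul, mul_smul]

variable [FiniteDimensional k H]

theorem IsComatrix.sum_comul_antipodeSq_mul_antipode_tmul_one {ι : Type*} [Fintype ι]
    [DecidableEq ι] {m : Matrix ι ι H} (hm : IsComatrix k m) (p j : ι) :
    ∑ l, comul (antipodeSq k H (m l j)) * (antipode k (m p l) ⊗ₜ[k] (1 : H)) =
      1 ⊗ₜ[k] antipodeSq k H (m p j) := by
  simp only [comul_antipodeSq, hm.comul_apply, map_sum, TensorProduct.map_tmul, Finset.sum_mul,
    Algebra.TensorProduct.tmul_mul_tmul, mul_one, AlgHom.toLinearMap_apply]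
  rw [Finset.sum_comm]
  simp [← TensorProduct.sum_tmul, hm.sum_antipodeSq_mul_antipode, TensorProduct.ite_tmul]

theorem sum_hitRight_mul_antipodeSq {ι : Type*} [Fintype ι] (b : Module.Basis ι k H)
    (f : H →ₗ[k] k) (h x : H) :
    ∑ i, hitRight (f ∘ₗ LinearMap.mulRight k (b i))
        (h * antipodeSq k H (hitRight (b.coord i ∘ₗ antipode k) x)) =
      hitRight f h * antipodeSq k H x := by
  let P (i : ι) : H →ₗ[k] H := hitRight (f ∘ₗ LinearMap.mulRight k (b i))
  let Q (i : ι) : H →ₗ[k] H := hitRight (b.coord i ∘ₗ antipode k)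
  let T (y : H) : H →ₗ[k] H := LinearMap.mulLeft k y ∘ₗ (antipodeSq k H).toLinearMap
  suffices ∑ i, P i ∘ₗ T h ∘ₗ Q i = T (hitRight f h) by
    simpa [P, Q, T] using LinearMap.congr_fun this x
  refine linearMap_ext_isComatrix fun d m hm p j => ?_
  calc (∑ i, P i ∘ₗ T h ∘ₗ Q i) (m p j)
    _ = ∑ l, ∑ i, b.repr (antipode k (m p l)) i • P i (h * antipodeSq k H (m l j)) := by
        simp only [LinearMap.sum_apply, LinearMap.comp_apply, Q, T, hm.hitRight_apply, map_sum,
          map_smul, LinearMap.mulLeft_apply, AlgHom.toLinearMap_apply, b.coord_apply]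
        exact Finset.sum_comm
    _ = ∑ l, evalFst f (comul (h * antipodeSq k H (m l j)) * antipode k (m p l) ⊗ₜ[k] 1) := by
        simp only [P, sum_smul_hitRight_comp_mulRight]
        simp only [hitRight_comp_mulRight]
    _ = evalFst f (comul h * 1 ⊗ₜ[k] antipodeSq k H (m p j)) := by
        simp only [Bialgebra.comul_mul, mul_assoc, ← map_sum, ← Finset.mul_sum,
          hm.sum_comul_antipodeSq_mul_antipode_tmul_one]
    _ = T (hitRight f h) (m p j) := by
        rw [evalFst_mul_tmul, LinearMap.mulRight_one, LinearMap.comp_id, evalFst_comul]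
        rfl

theorem sum_hitRight_hitRight_comp_mulRight {ι : Type*} [Fintype ι] (b : Module.Basis ι k H)
    (f : H →ₗ[k] k) (x : H) :
    ∑ i, hitRight (b.coord i ∘ₗ antipode k) (hitRight (f ∘ₗ LinearMap.mulRight k (b i)) x) =
      f 1 • x := by
  let P (i : ι) : H →ₗ[k] H := hitRight (f ∘ₗ LinearMap.mulRight k (b i))
  let Q (i : ι) : H →ₗ[k] H := hitRight (b.coord i ∘ₗ antipode k)
  suffices ∑ i, Q i ∘ₗ P i = f 1 • LinearMap.id by
    simpa [P, Q] using LinearMap.congr_fun this x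
  refine linearMap_ext_isComatrix fun d m hm p j => ?_
  calc (∑ i, Q i ∘ₗ P i) (m p j)
    _ = ∑ l, ∑ i, f (m p l * b i) • Q i (m l j) := by
        simp only [LinearMap.sum_apply, LinearMap.comp_apply, P, hm.hitRight_apply, map_sum,
          map_smul, LinearMap.mulRight_apply]
        exact Finset.sum_comm
    _ = ∑ q, f (∑ l, m p l * antipode k (m l q)) • m q j := by
        simp only [Q, sum_smul_hitRight_coord_comp_antipode]
        simp only [hm.hitRight_apply, map_sum, Finset.sum_smul, LinearMap.comp_apply,
          LinearMap.mulLeft_apply]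
        exact Finset.sum_comm
    _ = f 1 • m p j := by
        simp [hm.sum_mul_antipode, apply_ite f]

theorem antipodeSqTrace_hitRight (f : H →ₗ[k] k) (h : H) :
    antipodeSqTrace k H (hitRight f h) = f 1 * antipodeSqTrace k H h := by
  let b := Module.finBasis k H
  let T (y : H) : H →ₗ[k] H := LinearMap.mulLeft k y ∘ₗ (antipodeSq k H).toLinearMap
  let P (i) : H →ₗ[k] H := hitRight (f ∘ₗ LinearMap.mulRight k (b i))
  let Q (i) : H →ₗ[k] H := hitRight (b.coord i ∘ₗ antipode k)
  have hPTQ : T (hitRight f h) = ∑ i, P i * (T h * Q i) := by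
    ext x
    simpa [P, Q, T] using (sum_hitRight_mul_antipodeSq b f h x).symm
  have hQP : ∑ i, Q i * P i = f 1 • LinearMap.id := by
    ext x
    simpa [P, Q] using sum_hitRight_hitRight_comp_mulRight b f x
  calc LinearMap.trace k H (T (hitRight f h))
    _ = LinearMap.trace k H (T h * ∑ i, Q i * P i) := by
        rw [hPTQ, map_sum, Finset.mul_sum, map_sum]
        refine Finset.sum_congr rfl fun i _ => ?_
        rw [LinearMap.trace_mul_comm, mul_assoc]
    _ = f 1 * LinearMap.trace k H (T h) := by
        rw [hQP, mul_smul_comm, map_smul, smul_eq_mul]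
        rfl

theorem isLeftIntegral_antipodeSqTrace : IsLeftIntegral (antipodeSqTrace k H) := fun h => by
  rw [← sub_eq_zero, ← Module.forall_dual_apply_eq_zero_iff k]
  intro f
  rw [map_sub, apply_hitLeft, antipodeSqTrace_hitRight, map_smul, smul_eq_mul, mul_comm, sub_self]

end AntipodeSqTrace

section IntegralTheory

variable {k H : Type*} [Field k] [Ring H] [HopfAlgebra k H]

namespace IsNormalizedIntegral

variable {Λ : H} (hΛ : IsNormalizedIntegral k Λ)

include hΛ

theorem antipodeSqTrace_eq_one [FiniteDimensional k H] : antipodeSqTrace k H Λ = 1 := by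
  have h : LinearMap.mulLeft k Λ ∘ₗ (antipodeSq k H).toLinearMap =
      (counit (R := k) (A := H)).smulRight Λ := by
    ext x
    simp [hΛ.mul_right, antipodeSq_apply]
  rw [antipodeSqTrace_apply, h, LinearMap.trace_smulRight, hΛ.counit_eq]

theorem comul_mul_comul (h : H) : comul h * comul Λ = counit (R := k) h • comul (R := k) Λ := by
  rw [← Bialgebra.comul_mul, hΛ.mul_left, map_smul]

theorem comul_mul_comul' (h : H) : comul Λ * comul h = counit (R := k) h • comul (R := k) Λ := by
  rw [← Bialgebra.comul_mul, hΛ.mul_right, map_smul]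

variable [FiniteDimensional k H]

theorem one_tmul_mul_comul (h : H) :
    (1 : H) ⊗ₜ[k] h * comul Λ = antipode k h ⊗ₜ[k] (1 : H) * comul Λ := by
  suffices LinearMap.mulRight k (comul Λ) ∘ₗ TensorProduct.mk k H H 1 =
      LinearMap.mulRight k (comul Λ) ∘ₗ (TensorProduct.mk k H H).flip 1 ∘ₗ antipode k from
    LinearMap.congr_fun this h
  refine linearMap_ext_isComatrix fun d m hm i j => ?_
  simp [← hm.sum_antipode_tmul_one_mul_comul i j, mul_assoc, hΛ.comul_mul_comul,
    hm.counit_apply]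

theorem comul_mul_tmul_one (h : H) :
    comul Λ * h ⊗ₜ[k] (1 : H) = comul Λ * (1 : H) ⊗ₜ[k] antipode k h := by
  suffices LinearMap.mulLeft k (comul Λ) ∘ₗ (TensorProduct.mk k H H).flip 1 =
      LinearMap.mulLeft k (comul Λ) ∘ₗ TensorProduct.mk k H H 1 ∘ₗ antipode k from
    LinearMap.congr_fun this h
  refine linearMap_ext_isComatrix fun d m hm i j => ?_
  simp [← hm.sum_comul_mul_one_tmul_antipode i j, ← mul_assoc,
    hΛ.comul_mul_comul', hm.counit_apply]

theorem hitLeft_comp_mulLeft {f : H →ₗ[k] k} (hf : IsLeftIntegral f) (h : H) :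
    hitLeft (f ∘ₗ LinearMap.mulLeft k h) Λ = f Λ • antipode k h := by
  simpa [evalSnd_tmul_mul, evalSnd_comul, hf Λ] using
    congr_arg (evalSnd f) (hΛ.one_tmul_mul_comul h)

theorem hitLeft_comp_mulRight_antipode (h : H) :
    hitLeft (antipodeSqTrace k H ∘ₗ LinearMap.mulRight k (antipode k h)) Λ = h := by
  simpa [evalSnd_mul_tmul, evalSnd_comul, isLeftIntegral_antipodeSqTrace Λ,
    hΛ.antipodeSqTrace_eq_one] using
    (congr_arg (evalSnd (antipodeSqTrace k H)) (hΛ.comul_mul_tmul_one h)).symm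

theorem antipode_injective : Function.Injective (antipode k (A := H)) := fun x y hxy => by
  rw [← hΛ.hitLeft_comp_mulRight_antipode x, hxy, hΛ.hitLeft_comp_mulRight_antipode]

theorem antipode_surjective : Function.Surjective (antipode k (A := H)) :=
  LinearMap.injective_iff_surjective.1 hΛ.antipode_injective

theorem antipode_eq : antipode k Λ = Λ := by
  have hl (x : H) : x * antipode k Λ = counit (R := k) x • antipode k Λ := by
    obtain ⟨y, rfl⟩ := hΛ.antipode_surjective x
    rw [← antipode_mul_antidistrib, hΛ.mul_right, map_smul, counit_antipode]
  simpa [hΛ.mul_right, hΛ.counit_eq] using (hl Λ).symm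

theorem eq_zero_of_antipodeSqTrace_mul_left {h : H}
    (h0 : ∀ x, antipodeSqTrace k H (h * x) = 0) : h = 0 := by
  have hzero : antipodeSqTrace k H ∘ₗ LinearMap.mulLeft k h = 0 := LinearMap.ext h0
  apply hΛ.antipode_injective
  simpa [hzero, hΛ.antipodeSqTrace_eq_one] using
    (hΛ.hitLeft_comp_mulLeft isLeftIntegral_antipodeSqTrace h).symm

theorem eq_zero_of_antipodeSqTrace_mul_right {h : H}
    (h0 : ∀ x, antipodeSqTrace k H (x * h) = 0) : h = 0 := by
  refine hΛ.eq_zero_of_antipodeSqTrace_mul_left fun x => ?_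
  obtain ⟨y, rfl⟩ := hΛ.antipode_surjective x
  obtain ⟨z, rfl⟩ := hΛ.antipode_surjective y
  rw [← antipodeSq_apply, ← antipodeSqTrace_mul, h0]

theorem isRightIntegral_antipodeSqTrace_comp_antipode :
    IsRightIntegral (antipodeSqTrace k H ∘ₗ antipode k) := fun h => by
  apply hΛ.antipode_injective
  rw [antipode_hitRight, isLeftIntegral_antipodeSqTrace, map_smul, antipode_one]
  rfl

theorem apply_mul_apply_antipode {f ρ : H →ₗ[k] k} (hf : IsLeftIntegral f)
    (hρ : IsRightIntegral ρ) (h : H) : f Λ * ρ (antipode k h) = f h * ρ Λ := by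
  have := congr_arg ρ (hΛ.hitLeft_comp_mulLeft hf h)
  rw [apply_hitLeft, hρ] at this
  simpa [mul_comm] using this.symm

theorem isLeftIntegral_apply {f : H →ₗ[k] k} (hf : IsLeftIntegral f) (h : H) :
    f h = f Λ * antipodeSqTrace k H h := by
  simpa [← antipodeSq_apply, antipodeSqTrace_antipodeSq, hΛ.antipode_eq,
    hΛ.antipodeSqTrace_eq_one] using
    (hΛ.apply_mul_apply_antipode hf hΛ.isRightIntegral_antipodeSqTrace_comp_antipode h).symm

theorem isRightIntegral_apply {ρ : H →ₗ[k] k} (hρ : IsRightIntegral ρ) (h : H) :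
    ρ h = ρ Λ * antipodeSqTrace k H (antipode k h) := by
  obtain ⟨y, rfl⟩ := hΛ.antipode_surjective h
  simpa [← antipodeSq_apply, antipodeSqTrace_antipodeSq, hΛ.antipodeSqTrace_eq_one, mul_comm] using
    hΛ.apply_mul_apply_antipode isLeftIntegral_antipodeSqTrace hρ y

theorem hitRight_antipodeSqTrace (h : H) : hitRight (antipodeSqTrace k H) h =
    antipodeSqTrace k H h • hitRight (antipodeSqTrace k H) Λ := by
  rw [← sub_eq_zero, ← Module.forall_dual_apply_eq_zero_iff k]
  intro f
  have hf : IsLeftIntegral (antipodeSqTrace k H ∘ₗ hitLeft f) := fun x => by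
    rw [← hitLeft_hitLeft, isLeftIntegral_antipodeSqTrace]
    rfl
  rw [map_sub, map_smul, ← apply_hitLeft, ← apply_hitLeft, sub_eq_zero]
  simpa [mul_comm] using hΛ.isLeftIntegral_apply hf h

theorem isGroupLikeElem_hitRight_antipodeSqTrace :
    IsGroupLikeElem k (hitRight (antipodeSqTrace k H) Λ) where
  counit_eq_one := by rw [counit_hitRight, hΛ.antipodeSqTrace_eq_one]
  comul_eq_tmul_self := by
    have key (z : H ⊗[k] H) : (hitRight (antipodeSqTrace k H)).rTensor H z =
        hitRight (antipodeSqTrace k H) Λ ⊗ₜ[k] evalFst (antipodeSqTrace k H) z := by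
      induction z with
      | zero => simp
      | add x y hx hy => simp only [map_add, hx, hy, TensorProduct.tmul_add]
      | tmul x y =>
        rw [LinearMap.rTensor_tmul, hΛ.hitRight_antipodeSqTrace, evalFst_tmul,
          TensorProduct.smul_tmul]
    rw [comul_hitRight, key, evalFst_comul]

theorem antipodeSqTrace_antipode (h : H) : antipodeSqTrace k H (antipode k h) =
    antipodeSqTrace k H (h * hitRight (antipodeSqTrace k H) Λ) := by
  set g := hitRight (antipodeSqTrace k H) Λ with hg
  have hgl : IsGroupLikeElem k g := hΛ.isGroupLikeElem_hitRight_antipodeSqTrace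
  have hr : IsRightIntegral (antipodeSqTrace k H ∘ₗ LinearMap.mulRight k g) := fun x => by
    apply hgl.isUnit.mul_right_cancel
    have hxg := hΛ.hitRight_antipodeSqTrace (x * g)
    rw [← evalFst_comul, Bialgebra.comul_mul, hgl.comul_eq_tmul_self, evalFst_mul_tmul,
      evalFst_comul, ← hg] at hxg
    rw [hxg, smul_mul_assoc, one_mul]
    rfl
  simpa [hΛ.mul_right, hgl.counit_eq_one, hΛ.antipodeSqTrace_eq_one] using
    (hΛ.isRightIntegral_apply hr h).symm

theorem mul_hitRight_antipodeSqTrace (x : H) : x * hitRight (antipodeSqTrace k H) Λ =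
    hitRight (antipodeSqTrace k H) Λ * antipodeSq k H (antipodeSq k H x) := by
  rw [← sub_eq_zero]
  refine hΛ.eq_zero_of_antipodeSqTrace_mul_right fun y => ?_
  set g := hitRight (antipodeSqTrace k H) Λ
  have h : antipodeSqTrace k H (y * x * g) =
      antipodeSqTrace k H (y * g * antipodeSq k H (antipodeSq k H x)) :=
    calc antipodeSqTrace k H (y * x * g)
      _ = antipodeSqTrace k H (antipode k x * antipode k y) := by
          rw [← hΛ.antipodeSqTrace_antipode, antipode_mul_antidistrib]
      _ = antipodeSqTrace k H (antipode k (antipodeSq k H x * y)) := by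
          rw [antipodeSqTrace_mul, antipode_mul_antidistrib]
          rfl
      _ = antipodeSqTrace k H (antipodeSq k H x * (y * g)) := by
          rw [hΛ.antipodeSqTrace_antipode, mul_assoc]
      _ = antipodeSqTrace k H (y * g * antipodeSq k H (antipodeSq k H x)) :=
          antipodeSqTrace_mul _ _
  rw [mul_sub, map_sub, ← mul_assoc, ← mul_assoc, h, sub_self]

end IsNormalizedIntegral

theorem exists_pow_eq_one_of_isGroupLikeElem [FiniteDimensional k H] {g : H}
    (hg : IsGroupLikeElem k g) : ∃ N, 0 < N ∧ g ^ N = 1 := by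
  have : Finite (GroupLike k H) := (linearIndep_groupLikeVal (R := k) (A := H)).finite
  let γ : GroupLike k H := ⟨g, hg⟩
  obtain ⟨N, hN, h⟩ := isOfFinOrder_iff_pow_eq_one.1 (isOfFinOrder_of_finite γ)
  exact ⟨N, hN, by simpa [γ] using congr_arg GroupLike.val h⟩

end IntegralTheory

section Positivity

open scoped ComplexOrder

section FiniteOrder

variable {k : Type*} [Field k] [CharZero k]

/-- The positive elements of `k` with respect to an embedding `θ` of the algebraic numbers of `k`
into `ℂ`: those algebraic numbers which `θ` maps to positive reals. -/
def IsPositiveAt (θ : algebraicClosure ℚ k →+* ℂ) (x : k) : Prop :=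
  ∃ a : algebraicClosure ℚ k, (a : k) = x ∧ 0 < θ a

theorem sum_ne_zero_of_isPositiveAt {θ : algebraicClosure ℚ k →+* ℂ} {ι : Type*} [Fintype ι]
    [Nonempty ι] {x : ι → k} (hx : ∀ i, IsPositiveAt θ (x i)) : ∑ i, x i ≠ 0 := by
  choose a ha hpos using hx
  intro h0
  have ha0 : ∑ i, a i = 0 := Subtype.val_injective (by simpa [ha] using h0)
  have hsum : 0 < ∑ i, θ (a i) := Finset.sum_pos (fun i _ => hpos i) Finset.univ_nonempty
  rw [← map_sum, ha0, map_zero] at hsum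
  exact hsum.false

theorem map_inv_eq_conj_of_pow_eq_one {F : Type*} [Field F] (θ : F →+* ℂ) {z : F} {M : ℕ}
    (hM : M ≠ 0) (hz : z ^ M = 1) : θ z⁻¹ = starRingEnd ℂ (θ z) := by
  rw [map_inv₀]
  exact Complex.inv_eq_conj (Complex.norm_eq_one_of_pow_eq_one (by rw [← map_pow, hz, map_one]) hM)

theorem isPositiveAt_sum_mul_sum_inv (θ : algebraicClosure ℚ k →+* ℂ) {ι : Type*} [Fintype ι]
    {μ : ι → k} {M : ℕ} (hM : M ≠ 0) (hμ : ∀ i, μ i ^ M = 1) (h0 : ∑ i, (μ i)⁻¹ ≠ 0) :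
    IsPositiveAt θ ((∑ i, μ i) * ∑ i, (μ i)⁻¹) := by
  have hmem (i) : μ i ∈ algebraicClosure ℚ k := by
    rw [mem_algebraicClosure_iff']
    exact IsIntegral.of_pow (Nat.pos_of_ne_zero hM) (hμ i ▸ isIntegral_one)
  let z (i : ι) : algebraicClosure ℚ k := ⟨μ i, hmem i⟩
  have hconj : θ (∑ i, (z i)⁻¹) = starRingEnd ℂ (θ (∑ i, z i)) := by
    simp only [map_sum]
    exact Finset.sum_congr rfl fun i _ =>
      map_inv_eq_conj_of_pow_eq_one θ hM (Subtype.ext (hμ i) : z i ^ M = 1)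
  have hne : θ (∑ i, (z i)⁻¹) ≠ 0 := fun h => h0 <| by
    simpa [z] using congr_arg Subtype.val ((map_eq_zero θ).1 h)
  refine ⟨(∑ i, z i) * ∑ i, (z i)⁻¹, by simp [z], ?_⟩
  rw [hconj, map_ne_zero] at hne
  rw [map_mul, hconj]
  exact mul_star_self_pos (isUnit_iff_ne_zero.2 hne).isRegular

variable [IsAlgClosed k] {V : Type*} [AddCommGroup V] [Module k V] [FiniteDimensional k V]

theorem exists_eigenbasis_of_pow_eq_one {f : Module.End k V} {M : ℕ} (hM : M ≠ 0)
    (hf : f ^ M = 1) : ∃ (d : ℕ) (b : Module.Basis (Fin d) k V) (μ : Fin d → k),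
      ∀ i, f (b i) = μ i • b i := by
  have hss : f.IsSemisimple := by
    refine Module.End.isSemisimple_of_squarefree_aeval_eq_zero
      (p := Polynomial.X ^ M - Polynomial.C 1) ?_ (by simp [hf])
    exact (Polynomial.separable_X_pow_sub_C 1 (by exact_mod_cast hM) one_ne_zero).squarefree
  let s : Set V := {x | ∃ μ : k, f x = μ • x}
  have hs : ⊤ ≤ Submodule.span k s := by
    rw [← Module.End.iSup_maxGenEigenspace_eq_top f]
    simp_rw [hss.isFinitelySemisimple.maxGenEigenspace_eq_eigenspace]
    exact iSup_le fun μ x hx => Submodule.subset_span ⟨μ, Module.End.mem_eigenspace_iff.1 hx⟩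
  let b := Module.Basis.ofSpan hs
  have : Finite ((linearIndepOn_empty k (id : V → V)).extend (Set.empty_subset s)) :=
    Module.Finite.finite_basis b
  obtain ⟨d, ⟨e⟩⟩ := Finite.exists_equiv_fin
    ((linearIndepOn_empty k (id : V → V)).extend (Set.empty_subset s))
  choose μ hμ using fun i : Fin d => Module.Basis.ofSpan_subset hs ⟨e.symm i, rfl⟩
  exact ⟨d, b.reindex e, μ, fun i => by simpa [b] using hμ i⟩

theorem trace_eq_sum_of_apply_basis_eq_smul {R W ι : Type*} [CommRing R] [AddCommGroup W]
    [Module R W] [Fintype ι] {f : Module.End R W} (b : Module.Basis ι R W) {μ : ι → R}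
    (h : ∀ i, f (b i) = μ i • b i) : LinearMap.trace R W f = ∑ i, μ i := by
  classical
  rw [LinearMap.trace_eq_matrix_trace R b, Matrix.trace]
  simp [LinearMap.toMatrix_apply, h]

theorem isPositiveAt_trace_mul_trace_of_pow_eq_one (θ : algebraicClosure ℚ k →+* ℂ)
    {f g : Module.End k V} (hgf : g * f = 1) {M : ℕ} (hM : M ≠ 0) (hf : f ^ M = 1)
    (hg : LinearMap.trace k V g ≠ 0) :
    IsPositiveAt θ (LinearMap.trace k V f * LinearMap.trace k V g) := by
  obtain ⟨d, b, μ, hμ⟩ := exists_eigenbasis_of_pow_eq_one hM hf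
  have hμM (i) : μ i ^ M = 1 := by
    have hpow (n : ℕ) : (f ^ n) (b i) = μ i ^ n • b i := by
      induction n with
      | zero => simp
      | succ n ih => rw [pow_succ, Module.End.mul_apply, hμ, map_smul, ih, smul_smul, pow_succ']
    apply smul_left_injective k (b.ne_zero i)
    simp [← hpow, hf]
  have hμ0 (i) : μ i ≠ 0 := fun h => by simpa [h, hM] using hμM i
  have hgμ (i) : g (b i) = (μ i)⁻¹ • b i := by
    rw [eq_inv_smul_iff₀ (hμ0 i), ← map_smul, ← hμ, ← Module.End.mul_apply, hgf,
      Module.End.one_apply]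
  rw [trace_eq_sum_of_apply_basis_eq_smul b hgμ] at hg ⊢
  rw [trace_eq_sum_of_apply_basis_eq_smul b hμ]
  exact isPositiveAt_sum_mul_sum_inv θ hM hμM hg

theorem isPositiveAt_trace_mul_trace (θ : algebraicClosure ℚ k →+* ℂ)
    {f g : Module.End k V} (hgf : g * f = 1) {M : ℕ} (hM : M ≠ 0) {c : k} (hc : c ≠ 0)
    (hf : f ^ M = c • 1) (hg : LinearMap.trace k V g ≠ 0) :
    IsPositiveAt θ (LinearMap.trace k V f * LinearMap.trace k V g) := by
  obtain ⟨ζ, rfl⟩ := IsAlgClosed.exists_pow_nat_eq c (Nat.pos_of_ne_zero hM)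
  have hζ : ζ ≠ 0 := fun h => hc (by rw [h, zero_pow hM])
  have h := isPositiveAt_trace_mul_trace_of_pow_eq_one θ (f := ζ⁻¹ • f) (g := ζ • g) (M := M)
    (by rw [smul_mul_smul_comm, hgf, mul_inv_cancel₀ hζ, one_smul]) hM
    (by rw [smul_pow, hf, smul_smul, ← mul_pow, inv_mul_cancel₀ hζ, one_pow, one_smul])
    (by rw [map_smul]; exact smul_ne_zero hζ hg)
  rwa [map_smul, map_smul, smul_mul_smul_comm, inv_mul_cancel₀ hζ, one_smul] at h

end FiniteOrder

theorem exists_apply_eq_smul_one_of_commute {k ι : Type*} [Field k] {n : ι → Type*}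
    [∀ i, Fintype (n i)] [∀ i, DecidableEq (n i)]
    {w : (i : ι) → Matrix (n i) (n i) k} (hw : ∀ x, Commute w x) (i : ι) :
    ∃ c : k, w i = c • 1 := by
  classical
  have hi : w i ∈ Set.range (Matrix.scalar (n i)) := by
    refine Matrix.mem_range_scalar_of_commute_single fun p q _ => ?_
    have hpq := congr_fun (hw (Pi.single i (Matrix.single p q 1))).eq.symm i
    exact show _ = _ by simpa using hpq
  obtain ⟨c, hc⟩ := hi
  exact ⟨c, by rw [← hc, Matrix.smul_one_eq_diagonal]; rfl⟩

section PiMatrix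

variable {k ι : Type*} [Field k] [Fintype ι] {n : ι → Type*} [∀ i, Fintype (n i)]

variable (k n) in
/-- The sum of the traces of the components, a nondegenerate symmetric trace form on a product
of matrix algebras. -/
def piTrace : ((i : ι) → Matrix (n i) (n i) k) →ₗ[k] k :=
  ∑ i, Matrix.traceLinearMap (n i) k k ∘ₗ LinearMap.proj i

theorem piTrace_apply (x : (i : ι) → Matrix (n i) (n i) k) :
    piTrace k n x = ∑ i, (x i).trace := by
  simp [piTrace]

theorem piTrace_mul_comm (x y : (i : ι) → Matrix (n i) (n i) k) :
    piTrace k n (x * y) = piTrace k n (y * x) := by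
  simp only [piTrace_apply, Pi.mul_apply, fun i => Matrix.trace_mul_comm (x i) (y i)]

theorem trace_mulLeft_comp_mulRight_pi_matrix (a b : (i : ι) → Matrix (n i) (n i) k) :
    LinearMap.trace k _ (LinearMap.mulLeft k a ∘ₗ LinearMap.mulRight k b) =
      ∑ i, (a i).trace * (b i).trace := by
  classical
  rw [LinearMap.trace_eq_matrix_trace k (Pi.basis fun i => Matrix.stdBasis k (n i) (n i)),
    Matrix.trace, Fintype.sum_sigma]
  refine Finset.sum_congr rfl fun i _ => ?_
  rw [Fintype.sum_prod_type, Matrix.trace, Matrix.trace, Finset.sum_mul_sum]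
  refine Finset.sum_congr rfl fun p _ => Finset.sum_congr rfl fun q _ => ?_
  have repr_apply (M : Matrix (n i) (n i) k) :
      (Matrix.stdBasis k (n i) (n i)).repr M (p, q) = M p q := rfl
  rw [Matrix.diag_apply, LinearMap.toMatrix_apply, Pi.basis_repr, Pi.basis_apply, repr_apply,
    Matrix.stdBasis_eq_single]
  simp [Matrix.mul_apply, Matrix.single_apply, Finset.sum_ite_eq, ite_and]

theorem piTrace_mul_single [DecidableEq ι] (x : (i : ι) → Matrix (n i) (n i) k) (i : ι)
    (A : Matrix (n i) (n i) k) : piTrace k n (x * Pi.single i A) = (x i * A).trace := by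
  rw [piTrace_apply, Finset.sum_eq_single i]
  · simp
  · intro j _ hj
    simp [Pi.single_eq_of_ne hj]
  · simp

theorem eq_zero_of_piTrace_mul {x : (i : ι) → Matrix (n i) (n i) k}
    (h : ∀ y, piTrace k n (x * y) = 0) : x = 0 := by
  classical
  ext1 i
  refine Matrix.ext_iff_trace_mul_right.2 fun A => ?_
  rw [← piTrace_mul_single, h, Pi.zero_apply, zero_mul, Matrix.trace_zero]

variable [∀ i, DecidableEq (n i)] [∀ i, Nonempty (n i)]

theorem trace_inv_eq_one_of_trace_mulLeft_comp_conj [CharZero k]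
    {w : ((i : ι) → Matrix (n i) (n i) k)ˣ}
    (hw : ∀ x, LinearMap.trace k _ (LinearMap.mulLeft k (x * w.val) ∘ₗ
      LinearMap.mulRight k w⁻¹.val) = piTrace k n (w * x)) (i : ι) : (w⁻¹.val i).trace = 1 := by
  classical
  have hinv : w⁻¹.val i * w.val i = 1 := congr_fun w.inv_mul i
  have hinv' : w.val i * w⁻¹.val i = 1 := congr_fun w.mul_inv i
  have h := hw (Pi.single i (w⁻¹.val i))
  rw [trace_mulLeft_comp_mulRight_pi_matrix, piTrace_mul_single, hinv', Finset.sum_eq_single i,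
    Pi.mul_apply, Pi.single_eq_same, hinv, Matrix.trace_one] at h
  · exact (mul_eq_left₀ (Nat.cast_ne_zero.2 Fintype.card_ne_zero)).1 h
  · intro j _ hj
    simp [Pi.single_eq_of_ne hj]
  · simp

theorem sum_trace_mul_trace_inv_ne_zero [CharZero k] [IsAlgClosed k] [Nonempty ι]
    {w : ((i : ι) → Matrix (n i) (n i) k)ˣ} {M : ℕ} (hM : M ≠ 0)
    (hw : ∀ x, Commute (w.val ^ M) x) (htr : ∀ i, (w⁻¹.val i).trace ≠ 0) :
    ∑ i, (w.val i).trace * (w⁻¹.val i).trace ≠ 0 := by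
  have : Algebra.IsAlgebraic ℚ (algebraicClosure ℚ k) := by
    convert algebraicClosure.isAlgebraic ℚ k
    · rfl
    · exact Subsingleton.elim _ _
  let θ : algebraicClosure ℚ k →+* ℂ :=
    (IsAlgClosed.lift : algebraicClosure ℚ k →ₐ[ℚ] ℂ).toRingHom
  refine sum_ne_zero_of_isPositiveAt (θ := θ) fun i => ?_
  obtain ⟨c, hc⟩ := exists_apply_eq_smul_one_of_commute hw i
  have hinv : w⁻¹.val i * w.val i = 1 := congr_fun w.inv_mul i
  have hc0 : c ≠ 0 := by
    rintro rfl
    have h : w⁻¹.val ^ M * w.val ^ M = 1 := by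
      rw [← Units.val_pow_eq_pow_val, ← Units.val_pow_eq_pow_val, inv_pow, Units.inv_mul]
    have hi := congr_fun h i
    rw [Pi.mul_apply, hc, zero_smul, mul_zero] at hi
    exact zero_ne_one hi
  have trace_toLin (A : Matrix (n i) (n i) k) :
      LinearMap.trace k _ (Matrix.toLinAlgEquiv' A) = A.trace := Matrix.trace_toLin'_eq A
  rw [← trace_toLin, ← trace_toLin]
  refine isPositiveAt_trace_mul_trace θ (M := M) ?_ hM hc0 ?_ ?_
  · rw [← map_mul, hinv, map_one]
  · rw [← map_pow, ← Pi.pow_apply, hc, map_smul, map_one]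
  · rw [trace_toLin]
    exact htr i

end PiMatrix

-- `u` is the density of `τ` with respect to `t`: it turns the symmetry of `t` into the
-- twisted symmetry of `τ`.
theorem exists_unit_of_nakayama {k A : Type*} [Field k] [Ring A] [Algebra k A]
    [FiniteDimensional k A] {t τ : A →ₗ[k] k} {σ : A → A} (ht : ∀ x y, t (x * y) = t (y * x))
    (ht0 : ∀ x, (∀ y, t (x * y) = 0) → x = 0) (hτ : ∀ x y, τ (x * y) = τ (y * σ x))
    (hτ0 : ∀ x, (∀ y, τ (x * y) = 0) → x = 0) :
    ∃ u : Aˣ, (∀ x, τ x = t (u * x)) ∧ ∀ x, σ x = u * x * u⁻¹.val := by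
  obtain ⟨u, hu⟩ : ∃ u, ∀ x, τ x = t (u * x) := by
    let B : A →ₗ[k] Module.Dual k A := (LinearMap.mul k A).compr₂ t
    have hB : Function.Injective B := by
      rw [← LinearMap.ker_eq_bot, LinearMap.ker_eq_bot']
      exact fun x hx => ht0 x fun y => LinearMap.congr_fun hx y
    obtain ⟨u, hu⟩ := (LinearMap.injective_iff_surjective_of_finrank_eq_finrank
      Subspace.dual_finrank_eq.symm).1 hB τ
    exact ⟨u, fun x => (LinearMap.congr_fun hu x).symm⟩
  have hσ (x : A) : u * x = σ x * u := by
    rw [← sub_eq_zero]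
    refine ht0 _ fun y => ?_
    rw [sub_mul, map_sub, mul_assoc, ← hu, hτ, hu, ← mul_assoc, ht, mul_assoc, sub_self]
  have hinj : Function.Injective (LinearMap.mulLeft k u) := by
    rw [← LinearMap.ker_eq_bot, LinearMap.ker_eq_bot']
    refine fun x (hx : u * x = 0) => hτ0 x fun y => ?_
    rw [hu, ← mul_assoc, hx, zero_mul, map_zero]
  obtain ⟨v, hv : u * v = 1⟩ := LinearMap.injective_iff_surjective.1 hinj 1
  refine ⟨⟨u, v, hv, hinj ?_⟩, hu, fun x => ?_⟩
  · simp [← mul_assoc, hv]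
  · rw [Units.inv_mk, hσ, mul_assoc, hv, mul_one]

section HopfAlgebra

variable {k H : Type*} [Field k] [Ring H] [HopfAlgebra k H] [FiniteDimensional k H]

theorem IsNormalizedIntegral.exists_pow_commute {Λ : H} (hΛ : IsNormalizedIntegral k Λ) {u : Hˣ}
    (hu : ∀ x, antipodeSq k H x = u * x * u⁻¹.val) :
    ∃ M ≠ 0, ∀ x, Commute (u.val ^ M) x := by
  set g := hitRight (antipodeSqTrace k H) Λ with hg
  have hgl : IsGroupLikeElem k g := hΛ.isGroupLikeElem_hitRight_antipodeSqTrace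
  obtain ⟨N, hN, hgN⟩ := exists_pow_eq_one_of_isGroupLikeElem hgl
  have hug : Commute u.val g := by
    have h := hu g
    rwa [antipodeSq_apply, hgl.antipode_antipode, Units.eq_mul_inv_iff_mul_eq, eq_comm] at h
  have hcentral (x : H) : Commute (g * u.val ^ 2) x := by
    have h := hΛ.mul_hitRight_antipodeSqTrace x
    rw [← hg, hu, hu] at h
    calc g * u.val ^ 2 * x
      _ = g * (u * (u * x * u⁻¹.val) * u⁻¹.val) * u.val ^ 2 := by simp [pow_two, mul_assoc]
      _ = x * (g * u.val ^ 2) := by rw [← h, mul_assoc]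
  refine ⟨2 * N, by positivity, fun x => ?_⟩
  have hpow : (g * u.val ^ 2) ^ N = u.val ^ (2 * N) := by
    rw [(hug.symm.pow_right 2).mul_pow, hgN, one_mul, pow_mul]
  exact hpow ▸ (hcentral x).pow_left N

theorem antipodeSqTrace_one_ne_zero [CharZero k] [IsAlgClosed k] [IsSemisimpleRing H] :
    antipodeSqTrace k H 1 ≠ 0 := by
  obtain ⟨Λ, hΛ⟩ := exists_isNormalizedIntegral k H
  obtain ⟨n, d, hd, ⟨φ⟩⟩ := IsSemisimpleRing.exists_algEquiv_pi_matrix_of_isAlgClosed k H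
  have : Nontrivial H := (Bialgebra.counitAlgHom k H).toRingHom.domain_nontrivial
  have : Nonempty (Fin n) := by
    by_contra hn
    rw [not_nonempty_iff] at hn
    exact one_ne_zero (φ.injective (Subsingleton.elim _ _) : (1 : H) = 0)
  obtain ⟨u, hu, huS⟩ := exists_unit_of_nakayama (t := piTrace k (Fin <| d ·) ∘ₗ φ.toLinearMap)
    (fun x y => by simp [piTrace_mul_comm (φ x)])
    (fun x hx => φ.map_eq_zero_iff.1 <| eq_zero_of_piTrace_mul fun y => by
      simpa using hx (φ.symm y))
    antipodeSqTrace_mul fun _ => hΛ.eq_zero_of_antipodeSqTrace_mul_left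
  let w := Units.map φ.toAlgHom.toRingHom.toMonoidHom u
  have htrace (x : H) : antipodeSqTrace k H x = LinearMap.trace k _
      (LinearMap.mulLeft k (φ x * w.val) ∘ₗ LinearMap.mulRight k w⁻¹.val) := by
    rw [antipodeSqTrace_apply, ← LinearMap.trace_conj' _ φ.toLinearEquiv]
    congr 1
    refine LinearMap.ext fun y => ?_
    simp [LinearEquiv.conj_apply, huS, mul_assoc, w]
  obtain ⟨M, hM, hcomm⟩ := hΛ.exists_pow_commute huS
  have htr := trace_inv_eq_one_of_trace_mulLeft_comp_conj (w := w) fun x => by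
    simpa [hu, w] using (htrace (φ.symm x)).symm
  rw [htrace, map_one, one_mul, trace_mulLeft_comp_mulRight_pi_matrix]
  refine sum_trace_mul_trace_inv_ne_zero hM (fun x => ?_) fun i => htr i ▸ one_ne_zero
  simpa [w] using (hcomm (φ.symm x)).map φ

end HopfAlgebra

end Positivity

section Involution

variable {k V : Type*} [Field k] [AddCommGroup V] [Module k V] [FiniteDimensional k V]

theorem exists_nat_trace_of_isIdempotentElem {e : Module.End k V} (he : IsIdempotentElem e) :
    ∃ n : ℕ, LinearMap.trace k V e = n := by
  have hp : LinearMap.IsProj (LinearMap.range e) e :=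
    ⟨fun x => ⟨x, rfl⟩, by rintro _ ⟨y, rfl⟩; exact LinearMap.congr_fun he y⟩
  exact ⟨_, hp.trace⟩

theorem isIdempotentElem_half_smul_one_add {A : Type*} [Ring A] [Algebra k A] [CharZero k] {s : A}
    (hs : s * s = 1) : IsIdempotentElem ((2 : k)⁻¹ • (1 + s)) := by
  rw [IsIdempotentElem, smul_mul_smul_comm, mul_add, add_mul, add_mul, hs, one_mul, mul_one,
    one_mul, add_comm s 1, ← two_smul k (1 + s), smul_smul]
  congr 1
  norm_num

theorem eq_zero_or_eq_zero_of_add_mul_eq_sub {a b : ℕ} {m : ℤ} (h : ((a : ℤ) + b) * m = a - b)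
    (hne : (a : ℤ) - b ≠ 0) : a = 0 ∨ b = 0 := by
  by_contra! h0
  have ha : (0 : ℤ) < a := by have := h0.1; positivity
  have hb : (0 : ℤ) < b := by have := h0.2; positivity
  rcases lt_trichotomy m 0 with hm | rfl | hm
  · nlinarith
  · exact hne (by linarith)
  · nlinarith

-- All traces involved are integers, and `tr s = dim V * tr (G * s)` is bounded by `dim V`.
theorem eq_one_or_eq_neg_one_of_finrank_mul_trace [CharZero k] {s G : Module.End k V}
    (hs : s * s = 1) (hG : IsIdempotentElem G) (hGs : Commute G s)
    (htr : (Module.finrank k V : k) * LinearMap.trace k V (G * s) = LinearMap.trace k V s)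
    (h0 : LinearMap.trace k V s ≠ 0) : s = 1 ∨ s = -1 := by
  set Q : Module.End k V := (2 : k)⁻¹ • (1 + s)
  have hQ : IsIdempotentElem Q := isIdempotentElem_half_smul_one_add hs
  have hGQ : IsIdempotentElem (G * Q) :=
    hG.mul_of_commute (((Commute.one_right G).add_right hGs).smul_right _) hQ
  have hsQ : s = (2 : k) • Q - 1 := by
    rw [smul_smul, mul_inv_cancel₀ two_ne_zero, one_smul, add_sub_cancel_left]
  obtain ⟨a, ha⟩ := exists_nat_trace_of_isIdempotentElem hQ
  obtain ⟨b, hb⟩ := exists_nat_trace_of_isIdempotentElem hQ.one_sub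
  obtain ⟨p, hp⟩ := exists_nat_trace_of_isIdempotentElem hGQ
  obtain ⟨q, hq⟩ := exists_nat_trace_of_isIdempotentElem hG
  have htrs : LinearMap.trace k V s = a - b := by
    have h : s = Q - (1 - Q) := by rw [hsQ, two_smul]; abel
    rw [h, map_sub, ha, hb]
  have hab : (a : k) + b = Module.finrank k V := by
    rw [← ha, ← hb, ← map_add, add_sub_cancel, Module.End.one_eq_id, LinearMap.trace_id]
  have htGs : LinearMap.trace k V (G * s) = 2 * p - q := by
    rw [hsQ, mul_sub, mul_smul_comm, mul_one, map_sub, map_smul, hp, hq, smul_eq_mul]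
  rw [htGs, htrs, ← hab] at htr
  rw [htrs] at h0
  rcases eq_zero_or_eq_zero_of_add_mul_eq_sub (a := a) (b := b) (m := 2 * p - q)
    (by exact_mod_cast htr) (by exact_mod_cast h0) with rfl | rfl
  · right
    rw [Nat.cast_zero, LinearMap.IsIdempotentElem.trace_eq_zero_iff hQ] at ha
    rw [hsQ, ha, smul_zero, zero_sub]
  · left
    rw [Nat.cast_zero, LinearMap.IsIdempotentElem.trace_eq_zero_iff hQ.one_sub, sub_eq_zero] at hb
    rw [hsQ, ← hb, two_smul, add_sub_cancel_right]

end Involution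

section RegularCharacter

section Bialgebra

variable {R A : Type*} [CommRing R] [Ring A] [Bialgebra R A]

variable (R A) in
/-- The character of the left regular representation. -/
def regChar : A →ₗ[R] R := LinearMap.trace R A ∘ₗ LinearMap.mul R A

theorem regChar_apply (h : A) : regChar R A h = LinearMap.trace R A (LinearMap.mulLeft R h) := rfl

variable (R A) in
/-- The Galois map `x ⊗ y ↦ Δ(x)(1 ⊗ y)`. It intertwines the regular representation of `A` on the
first factor with the tensor square of the regular representation. -/
def galoisMap : A ⊗[R] A →ₗ[R] A ⊗[R] A :=
  LinearMap.mul' R (A ⊗[R] A) ∘ₗ TensorProduct.map (comul (R := R)) (TensorProduct.mk R A A 1)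

@[simp] theorem galoisMap_tmul (x y : A) :
    galoisMap R A (x ⊗ₜ y) = comul (R := R) x * (1 : A) ⊗ₜ[R] y := by
  simp [galoisMap]

theorem galoisMap_mul_one_tmul (z : A ⊗[R] A) (y : A) :
    galoisMap R A (z * (1 : A) ⊗ₜ[R] y) = galoisMap R A z * (1 : A) ⊗ₜ[R] y := by
  induction z with
  | zero => simp
  | add x y hx hy => simp only [map_add, add_mul, hx, hy]
  | tmul x y => simp [mul_assoc]

theorem galoisMap_map_mulLeft (h : A) (z : A ⊗[R] A) :
    galoisMap R A (TensorProduct.map (LinearMap.mulLeft R h) LinearMap.id z) =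
      comul (R := R) h * galoisMap R A z := by
  induction z with
  | zero => simp
  | add x y hx hy => simp only [map_add, mul_add, hx, hy]
  | tmul x y => simp [mul_assoc]

theorem trace_mulLeft_tensorProduct [Module.Free R A] [Module.Finite R A] (z : A ⊗[R] A) :
    LinearMap.trace R _ (LinearMap.mulLeft R z) = regChar R A (evalSnd (regChar R A) z) := by
  change (LinearMap.trace R _ ∘ₗ LinearMap.mul R (A ⊗[R] A)) z =
    (regChar R A ∘ₗ evalSnd (regChar R A)) z
  congr 1
  refine TensorProduct.ext' fun x y => ?_
  have hxy : LinearMap.mulLeft R (x ⊗ₜ[R] y) =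
      TensorProduct.map (LinearMap.mulLeft R x) (LinearMap.mulLeft R y) := by
    ext
    simp
  change LinearMap.trace R _ (LinearMap.mulLeft R (x ⊗ₜ[R] y)) = _
  rw [hxy, LinearMap.trace_tensorProduct']
  simp [regChar_apply, mul_comm]

end Bialgebra

variable {k H : Type*} [Field k] [Ring H] [HopfAlgebra k H]

theorem regChar_antipodeSq (hS : ∀ x, antipodeSq k H (antipodeSq k H x) = x) (x : H) :
    regChar k H (antipodeSq k H x) = regChar k H x := by
  let s : Module.End k H := (antipodeSq k H).toLinearMap
  have hss : s * s = 1 := LinearMap.ext hS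
  have h : LinearMap.mulLeft k (antipodeSq k H x) = s * LinearMap.mulLeft k x * s := by
    ext y
    simp [s, hS]
  rw [regChar_apply, regChar_apply, h, LinearMap.trace_mul_comm, ← mul_assoc, hss, one_mul]

variable [FiniteDimensional k H]

theorem galoisMap_surjective : Function.Surjective (galoisMap k H) := by
  have htmul : galoisMap k H ∘ₗ (antipode k).lTensor H ∘ₗ comul =
      (TensorProduct.mk k H H).flip 1 :=
    linearMap_ext_isComatrix fun d m hm i j => by
      simpa [hm.comul_apply] using hm.sum_comul_mul_one_tmul_antipode i j
  rw [← LinearMap.range_eq_top, eq_top_iff, ← TensorProduct.span_tmul_eq_top, Submodule.span_le]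
  rintro _ ⟨x, y, rfl⟩
  have hx : galoisMap k H _ = x ⊗ₜ[k] (1 : H) := LinearMap.congr_fun htmul x
  exact ⟨_, by rw [galoisMap_mul_one_tmul, hx, Algebra.TensorProduct.tmul_mul_tmul, mul_one,
    one_mul]⟩

theorem regChar_hitLeft (h : H) :
    regChar k H (hitLeft (regChar k H) h) = (Module.finrank k H : k) * regChar k H h := by
  let e := LinearEquiv.ofBijective (galoisMap k H)
    ⟨LinearMap.injective_iff_surjective.2 galoisMap_surjective, galoisMap_surjective⟩
  have hconj : e.conj (TensorProduct.map (LinearMap.mulLeft k h) LinearMap.id) =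
      LinearMap.mulLeft k (comul (R := k) h) := by
    refine LinearMap.ext fun z => ?_
    obtain ⟨w, rfl⟩ := e.surjective z
    rw [LinearEquiv.conj_apply, LinearMap.comp_apply, LinearMap.comp_apply, LinearEquiv.coe_coe,
      LinearEquiv.coe_coe, LinearEquiv.symm_apply_apply]
    exact galoisMap_map_mulLeft h w
  rw [← evalSnd_comul, ← trace_mulLeft_tensorProduct, ← hconj, LinearMap.trace_conj',
    LinearMap.trace_tensorProduct', LinearMap.trace_id, ← regChar_apply, mul_comm]

theorem hitLeft_regChar_mul_hitLeft_regChar : (hitLeft (regChar k H) * hitLeft (regChar k H) :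
    Module.End k H) = (Module.finrank k H : k) • hitLeft (regChar k H) := by
  have h : regChar k H ∘ₗ hitLeft (regChar k H) = (Module.finrank k H : k) • regChar k H :=
    LinearMap.ext regChar_hitLeft
  rw [← hitLeft_smul, ← h]
  exact LinearMap.ext fun x => hitLeft_hitLeft _ _ x

theorem IsNormalizedIntegral.regChar_eq_one {Λ : H} (hΛ : IsNormalizedIntegral k Λ) :
    regChar k H Λ = 1 := by
  have h : LinearMap.mulLeft k Λ = (counit (R := k) (A := H)).smulRight Λ := by
    ext x
    simp [hΛ.mul_right]
  rw [regChar_apply, h, LinearMap.trace_smulRight, hΛ.counit_eq]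

theorem commute_hitLeft_antipodeSq {f : H →ₗ[k] k} (hf : ∀ x, f (antipodeSq k H x) = f x) :
    Commute (hitLeft f) (antipodeSq k H).toLinearMap := by
  refine LinearMap.ext fun x => ?_
  change hitLeft f (antipodeSq k H x) = antipodeSq k H (hitLeft f x)
  rw [← evalSnd_comul, comul_antipodeSq, ← evalSnd_comul]
  induction comul (R := k) x with
  | zero => simp
  | add x y hx hy => simp only [map_add, hx, hy]
  | tmul x y => simp [hf]

end RegularCharacter

section Involutivity

variable {k H : Type*} [Field k] [Ring H] [HopfAlgebra k H] [FiniteDimensional k H]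

namespace IsNormalizedIntegral

variable {Λ : H} (hΛ : IsNormalizedIntegral k Λ) (h1 : antipodeSqTrace k H 1 ≠ 0)

include hΛ h1

theorem hitRight_antipodeSqTrace_eq_one : hitRight (antipodeSqTrace k H) Λ = 1 := by
  have h := hΛ.hitRight_antipodeSqTrace 1
  rw [← evalFst_comul, Bialgebra.comul_one, Algebra.TensorProduct.one_def, evalFst_tmul] at h
  exact (smul_right_injective H h1 h).symm

theorem isRightIntegral_antipodeSqTrace : IsRightIntegral (antipodeSqTrace k H) := fun h => by
  rw [hΛ.hitRight_antipodeSqTrace, hΛ.hitRight_antipodeSqTrace_eq_one h1]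

theorem antipodeSq_antipodeSq (x : H) : antipodeSq k H (antipodeSq k H x) = x := by
  have h := hΛ.mul_hitRight_antipodeSqTrace x
  rw [hΛ.hitRight_antipodeSqTrace_eq_one h1, mul_one, one_mul] at h
  exact h.symm

-- The expansion `x = τ(xΛ₂) S³(Λ₁)` exhibits `S³(Λ₁) ⊗ τ(· Λ₂)` as a pair of dual bases.
theorem trace_eq (T : H →ₗ[k] H) : LinearMap.trace k H T =
    antipodeSqTrace k H (LinearMap.mul' k H (TensorProduct.map
      (T ∘ₗ (antipodeSq k H).toLinearMap ∘ₗ antipode k) LinearMap.id (comul Λ))) := by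
  have hT : T = ∑ i ∈ (ℛ k Λ).index,
      (antipodeSqTrace k H ∘ₗ LinearMap.mulRight k ((ℛ k Λ).right i)).smulRight
        (T (antipodeSq k H (antipode k ((ℛ k Λ).left i)))) := by
    ext x
    have hx := hΛ.hitLeft_comp_mulLeft isLeftIntegral_antipodeSqTrace x
    rw [hΛ.antipodeSqTrace_eq_one, one_smul] at hx
    have hx' : antipodeSq k H (antipode k (antipode k x)) = x := hΛ.antipodeSq_antipodeSq h1 x
    conv_lhs => rw [← hx', ← hx, ← evalSnd_comul, ← (ℛ k Λ).eq]
    simp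
  conv_lhs => rw [hT]
  rw [← (ℛ k Λ).eq]
  simp [LinearMap.trace_smulRight]

theorem trace_hitLeft_comp_antipodeSq (f : H →ₗ[k] k) :
    LinearMap.trace k H (hitLeft f ∘ₗ (antipodeSq k H).toLinearMap) =
      f Λ * antipodeSqTrace k H 1 := by
  have hhit : (hitLeft f ∘ₗ (antipodeSq k H).toLinearMap) ∘ₗ
      (antipodeSq k H).toLinearMap ∘ₗ antipode k = antipode k ∘ₗ hitRight (f ∘ₗ antipode k) := by
    ext x
    simp [hΛ.antipodeSq_antipodeSq h1, antipode_hitRight]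
  have hcomul : TensorProduct.map (antipode k ∘ₗ hitRight (f ∘ₗ antipode k)) LinearMap.id
      (comul Λ) = (antipode k).rTensor H (comul (R := k) (hitRight (f ∘ₗ antipode k) Λ)) := by
    rw [comul_hitRight, ← LinearMap.comp_apply (LinearMap.rTensor H _), ← LinearMap.rTensor_comp]
    rfl
  rw [hΛ.trace_eq h1, hhit, hcomul, mul_antipode_rTensor_comul_apply, counit_hitRight,
    LinearMap.comp_apply, hΛ.antipode_eq, Algebra.algebraMap_eq_smul_one, map_smul, smul_eq_mul]

theorem antipodeSq_eq_id [CharZero k] : antipodeSq k H = AlgHom.id k H := by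
  have : Nontrivial H := (Bialgebra.counitAlgHom k H).toRingHom.domain_nontrivial
  have hn : (Module.finrank k H : k) ≠ 0 := by exact_mod_cast Module.finrank_pos.ne'
  have hS := hΛ.antipodeSq_antipodeSq h1
  let s : Module.End k H := (antipodeSq k H).toLinearMap
  let G : Module.End k H := (Module.finrank k H : k)⁻¹ • hitLeft (regChar k H)
  have hG : IsIdempotentElem G := by
    rw [IsIdempotentElem, smul_mul_smul_comm, hitLeft_regChar_mul_hitLeft_regChar, smul_smul,
      mul_assoc, inv_mul_cancel₀ hn, mul_one]
  have hGs : Commute G s :=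
    (commute_hitLeft_antipodeSq (regChar_antipodeSq hS)).smul_left _
  have htrs : LinearMap.trace k H s = antipodeSqTrace k H 1 := by
    rw [antipodeSqTrace_apply, LinearMap.mulLeft_one, LinearMap.id_comp]
  have htrG : (Module.finrank k H : k) * LinearMap.trace k H (G * s) = LinearMap.trace k H s := by
    have h := hΛ.trace_hitLeft_comp_antipodeSq h1 (regChar k H)
    rw [hΛ.regChar_eq_one, one_mul, ← htrs] at h
    rw [← h, smul_mul_assoc, map_smul, smul_eq_mul, mul_inv_cancel_left₀ hn]
    rfl
  rcases eq_one_or_eq_neg_one_of_finrank_mul_trace (LinearMap.ext hS) hG hGs htrG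
    (htrs ▸ h1) with hs | hs
  · exact AlgHom.ext (LinearMap.congr_fun hs)
  · have h := LinearMap.congr_fun hs 1
    have hneg : (1 : H) = -1 := by simpa [s] using h
    have hcounit := congr_arg (counit (R := k)) hneg
    norm_num [eq_neg_iff_add_eq_zero] at hcounit

end IsNormalizedIntegral

end Involutivity

section Subcoalgebra

theorem eq_of_forall_evalSnd_eq {k M N : Type*} [Field k] [AddCommGroup M] [Module k M]
    [AddCommGroup N] [Module k N] {z w : M ⊗[k] N}
    (h : ∀ f : N →ₗ[k] k, evalSnd f z = evalSnd f w) : z = w := by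
  classical
  let b := Module.Basis.ofVectorSpace k N
  have apply_eq (z : M ⊗[k] N) (i) :
      TensorProduct.equivFinsuppOfBasisRight b z i = evalSnd (b.coord i) z := by
    induction z with
    | zero => simp
    | add x y hx hy => simp only [map_add, Finsupp.add_apply, hx, hy]
    | tmul x y => simp
  refine (TensorProduct.equivFinsuppOfBasisRight b).injective (Finsupp.ext fun i => ?_)
  rw [apply_eq, apply_eq, h]

theorem eq_of_forall_evalFst_eq {k M N : Type*} [Field k] [AddCommGroup M] [Module k M]
    [AddCommGroup N] [Module k N] {z w : M ⊗[k] N}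
    (h : ∀ f : M →ₗ[k] k, evalFst f z = evalFst f w) : z = w := by
  classical
  let b := Module.Basis.ofVectorSpace k M
  have apply_eq (z : M ⊗[k] N) (i) :
      TensorProduct.equivFinsuppOfBasisLeft b z i = evalFst (b.coord i) z := by
    induction z with
    | zero => simp
    | add x y hx hy => simp only [map_add, Finsupp.add_apply, hx, hy]
    | tmul x y => simp
  refine (TensorProduct.equivFinsuppOfBasisLeft b).injective (Finsupp.ext fun i => ?_)
  rw [apply_eq, apply_eq, h]

theorem mem_range_map_subtype_iff {k V : Type*} [Field k] [AddCommGroup V] [Module k V]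
    {E : Submodule k V} {z : V ⊗[k] V} :
    z ∈ LinearMap.range (TensorProduct.map E.subtype E.subtype) ↔
      ∀ f : V →ₗ[k] k, evalSnd f z ∈ E ∧ evalFst f z ∈ E := by
  refine ⟨fun hz f => ⟨evalSnd_mem hz f, evalFst_mem hz f⟩, fun hz => ?_⟩
  obtain ⟨π, hπ⟩ := E.subtype.exists_leftInverse_of_injective E.ker_subtype
  have hπE (y : V) (hy : y ∈ E) : (E.subtype ∘ₗ π) y = y :=
    congr_arg Subtype.val (LinearMap.congr_fun hπ ⟨y, hy⟩)
  have rTensor_eq : (E.subtype ∘ₗ π).rTensor V z = z :=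
    eq_of_forall_evalSnd_eq fun f => by rw [evalSnd_rTensor, hπE _ (hz f).1]
  have lTensor_eq : (E.subtype ∘ₗ π).lTensor V z = z :=
    eq_of_forall_evalFst_eq fun f => by rw [evalFst_lTensor, hπE _ (hz f).2]
  refine ⟨TensorProduct.map π π z, ?_⟩
  conv_rhs => rw [← rTensor_eq, ← lTensor_eq]
  rw [TensorProduct.map_map, ← LinearMap.rTensor_comp_lTensor, LinearMap.comp_apply]

variable {k H : Type} [Field k] [Ring H] [HopfAlgebra k H]

theorem isSubcoalgebra_iff_hit_mem {E : Submodule k H} : IsSubcoalgebra k H E ↔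
    ∀ x ∈ E, ∀ f : H →ₗ[k] k, hitLeft f x ∈ E ∧ hitRight f x ∈ E :=
  forall₂_congr fun _ _ => mem_range_map_subtype_iff

theorem isSubcoalgebra_sSup {S : Set (Submodule k H)} (hS : ∀ D ∈ S, IsSubcoalgebra k H D) :
    IsSubcoalgebra k H (sSup S) := by
  refine isSubcoalgebra_iff_hit_mem.2 fun x hx f => ⟨?_, ?_⟩
  · exact (sSup_le fun D hD y hy =>
      le_sSup hD (isSubcoalgebra_iff_hit_mem.1 (hS D hD) y hy f).1 :
        sSup S ≤ (sSup S).comap (hitLeft f)) hx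
  · exact (sSup_le fun D hD y hy =>
      le_sSup hD (isSubcoalgebra_iff_hit_mem.1 (hS D hD) y hy f).2 :
        sSup S ≤ (sSup S).comap (hitRight f)) hx

namespace IsSubcoalgebra

variable {C D : Submodule k H}

theorem inf (hC : IsSubcoalgebra k H C) (hD : IsSubcoalgebra k H D) :
    IsSubcoalgebra k H (C ⊓ D) :=
  isSubcoalgebra_iff_hit_mem.2 fun x hx f =>
    have hxC := isSubcoalgebra_iff_hit_mem.1 hC x hx.1 f
    have hxD := isSubcoalgebra_iff_hit_mem.1 hD x hx.2 f
    ⟨⟨hxC.1, hxD.1⟩, ⟨hxC.2, hxD.2⟩⟩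

theorem mul (hC : IsSubcoalgebra k H C) (hD : IsSubcoalgebra k H D) :
    IsSubcoalgebra k H (C * D) := fun x hx => by
  induction hx using Submodule.mul_induction_on' with
  | mem_mul_mem c hc d hd =>
    obtain ⟨u, hu⟩ := hC c hc
    obtain ⟨v, hv⟩ := hD d hd
    rw [Bialgebra.comul_mul, ← hu, ← hv]
    clear hu hv
    induction u with
    | zero => simp
    | add a b ha hb => rw [map_add, add_mul]; exact add_mem ha hb
    | tmul a b =>
      induction v with
      | zero => simp
      | add a b ha hb => rw [map_add, mul_add]; exact add_mem ha hb
      | tmul a' b' =>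
        exact ⟨⟨a * a', Submodule.mul_mem_mul a.2 a'.2⟩ ⊗ₜ ⟨b * b', Submodule.mul_mem_mul b.2 b'.2⟩,
          by simp⟩
  | add x _ y _ hx hy => rw [map_add]; exact add_mem hx hy

theorem eqOn_of_isComatrix [FiniteDimensional k C] (hC : IsSubcoalgebra k H C) {M : Type*}
    [AddCommGroup M] [Module k M] {f g : H →ₗ[k] M}
    (h : ∀ (d : ℕ) (m : Matrix (Fin d) (Fin d) H), IsComatrix k m → (∀ i j, m i j ∈ C) →
      ∀ i j, f (m i j) = g (m i j)) : Set.EqOn f g C :=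
  le_of_forall_isComatrix (F := LinearMap.eqLocus f g) hC h

theorem exists_isSimpleSubcoalgebra_le [FiniteDimensional k H] (hC : IsSubcoalgebra k H C)
    (hC0 : C ≠ ⊥) : ∃ D ≤ C, IsSimpleSubcoalgebra k H D := by
  obtain ⟨D, ⟨hDC, hD, hD0⟩, hmin⟩ := wellFounded_lt.has_min
    {D : Submodule k H | D ≤ C ∧ IsSubcoalgebra k H D ∧ D ≠ ⊥} ⟨C, le_rfl, hC, hC0⟩
  exact ⟨D, hDC, hD, hD0, fun E hED hE hE0 =>
    eq_of_le_of_not_lt hED (hmin E ⟨hED.trans hDC, hE, hE0⟩)⟩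

end IsSubcoalgebra

end Subcoalgebra

section Cocommutative

theorem IsComatrix.kronecker {R A : Type*} [CommSemiring R] [Semiring A] [Bialgebra R A]
    {ι κ : Type*} [Fintype ι] [DecidableEq ι] [Fintype κ] [DecidableEq κ]
    {m : Matrix ι ι A} {n : Matrix κ κ A} (hm : IsComatrix R m) (hn : IsComatrix R n) :
    IsComatrix R (Matrix.of fun (x y : ι × κ) => m x.1 y.1 * n x.2 y.2) := by
  refine ⟨fun x y => ?_, fun x y => ?_⟩
  · simp only [Matrix.of_apply, Bialgebra.comul_mul, hm.comul_apply, hn.comul_apply,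
      Finset.sum_mul_sum, Algebra.TensorProduct.tmul_mul_tmul, Fintype.sum_prod_type]
  · simp only [Matrix.of_apply, Bialgebra.counit_mul, hm.counit_apply, hn.counit_apply,
      Prod.ext_iff, ite_and, ite_mul, one_mul, zero_mul]

variable {k H : Type} [Field k] [Ring H] [HopfAlgebra k H]

theorem IsComatrix.isCocomm_trace {ι : Type*} [Fintype ι] [DecidableEq ι] {m : Matrix ι ι H}
    (hm : IsComatrix k m) : IsCocomm k H m.trace := by
  simp only [IsCocomm, Matrix.trace, Matrix.diag_apply, map_sum, hm.comul_apply,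
    TensorProduct.comm_tmul]
  exact Finset.sum_comm

theorem IsCocomm.mul {c d : H} (hc : IsCocomm k H c) (hd : IsCocomm k H d) :
    IsCocomm k H (c * d) := by
  have h := map_mul (Algebra.TensorProduct.comm k H H) (comul (R := k) c) (comul (R := k) d)
  rw [← Bialgebra.comul_mul] at h
  refine h.trans ?_
  rw [Bialgebra.comul_mul]
  exact congr_arg₂ (· * ·) hc hd

end Cocommutative

section Haar

variable {k H : Type*} [Field k] [Ring H] [HopfAlgebra k H]

/-- A Haar functional: a two-sided integral in the dual of a Hopf algebra, normalized by
`l(1) = 1`. -/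
structure IsHaar (l : H →ₗ[k] k) : Prop where
  apply_one : l 1 = 1
  left : IsLeftIntegral l
  right : IsRightIntegral l

variable (k H) in
theorem exists_isHaar [FiniteDimensional k H] [CharZero k] [IsAlgClosed k] [IsSemisimpleRing H] :
    ∃ l : H →ₗ[k] k, IsHaar l := by
  obtain ⟨Λ, hΛ⟩ := exists_isNormalizedIntegral k H
  have h1 : antipodeSqTrace k H 1 ≠ 0 := antipodeSqTrace_one_ne_zero
  exact ⟨(antipodeSqTrace k H 1)⁻¹ • antipodeSqTrace k H, inv_mul_cancel₀ h1,
    isLeftIntegral_antipodeSqTrace.smul _, (hΛ.isRightIntegral_antipodeSqTrace h1).smul _⟩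

namespace IsHaar

variable {l : H →ₗ[k] k} (hl : IsHaar l)
variable {ι : Type*} [Fintype ι] [DecidableEq ι] {m : Matrix ι ι H} (hm : IsComatrix k m)

include hl hm

theorem sum_antipode_mul_smul (y : H) (i j : ι) :
    ∑ r, l (antipode k (m r j) * y) • m i r =
      hitRight (l ∘ₗ LinearMap.mulLeft k (antipode k (m i j))) y := by
  have smul_eq (r : ι) : l (antipode k (m r j) * y) • m i r =
      ∑ s, m i r * antipode k (m r s) *
        hitRight (l ∘ₗ LinearMap.mulLeft k (antipode k (m s j))) y := by
    rw [← mul_one (m i r), ← mul_smul_comm, ← hl.right, ← evalFst_comul, Bialgebra.comul_mul,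
      hm.comul_antipode, Finset.sum_mul, map_sum, Finset.mul_sum]
    simp only [evalFst_tmul_mul, evalFst_comul, mul_one, mul_assoc]
  simp only [smul_eq]
  rw [Finset.sum_comm]
  simp [← Finset.sum_mul, hm.sum_mul_antipode]

theorem sum_mul_antipode_smul (y : H) (i j : ι) :
    ∑ r, l (y * antipode k (m i r)) • m r j =
      hitLeft (l ∘ₗ LinearMap.mulRight k (antipode k (m i j))) y := by
  have smul_eq (r : ι) : l (y * antipode k (m i r)) • m r j =
      ∑ s, hitLeft (l ∘ₗ LinearMap.mulRight k (antipode k (m i s))) y *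
        (antipode k (m s r) * m r j) := by
    rw [← one_mul (m r j), ← smul_mul_assoc, ← hl.left, ← evalSnd_comul, Bialgebra.comul_mul,
      hm.comul_antipode, Finset.mul_sum, map_sum, Finset.sum_mul]
    simp only [evalSnd_mul_tmul, evalSnd_comul, one_mul, mul_assoc]
  simp only [smul_eq]
  rw [Finset.sum_comm]
  simp [← Finset.mul_sum, hm.sum_antipode_mul]

end IsHaar

end Haar

section SupportFunctional

variable {k H : Type*} [Field k] [Ring H] [HopfAlgebra k H]

/-- The functional `h ↦ l(S(h₁) p(h₂))`. For a Haar functional `l` and a projection `p` onto a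
subcoalgebra `E` it agrees with the counit on `E`, and `h₁ u(h₂)` lies in `E` for all `h`. -/
def leftSupport (l : H →ₗ[k] k) (p : H →ₗ[k] H) : H →ₗ[k] k :=
  l ∘ₗ LinearMap.mul' k H ∘ₗ TensorProduct.map (antipode k) p ∘ₗ comul

/-- The functional `h ↦ l(p(h₁) S(h₂))`, the mirror image of `leftSupport`. -/
def rightSupport (l : H →ₗ[k] k) (p : H →ₗ[k] H) : H →ₗ[k] k :=
  l ∘ₗ LinearMap.mul' k H ∘ₗ TensorProduct.map p (antipode k) ∘ₗ comul

theorem IsComatrix.leftSupport_apply {ι : Type*} [Fintype ι] [DecidableEq ι] {m : Matrix ι ι H}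
    (hm : IsComatrix k m) (l : H →ₗ[k] k) (p : H →ₗ[k] H) (i j : ι) :
    leftSupport l p (m i j) = ∑ r, l (antipode k (m i r) * p (m r j)) := by
  simp [leftSupport, hm.comul_apply]

theorem IsComatrix.rightSupport_apply {ι : Type*} [Fintype ι] [DecidableEq ι] {m : Matrix ι ι H}
    (hm : IsComatrix k m) (l : H →ₗ[k] k) (p : H →ₗ[k] H) (i j : ι) :
    rightSupport l p (m i j) = ∑ r, l (p (m i r) * antipode k (m r j)) := by
  simp [rightSupport, hm.comul_apply]

/-- A support functional of a subspace `E`: it restricts to the counit on `E`, and both hit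
actions of it send `H` into `E`. For a subcoalgebra `E` it is the central idempotent of the dual
algebra that cuts out `E`. -/
structure IsSupport (E : Submodule k H) (u : H →ₗ[k] k) : Prop where
  apply_eq (x : H) (hx : x ∈ E) : u x = counit (R := k) x
  hitLeft_mem (h : H) : hitLeft u h ∈ E
  hitRight_mem (h : H) : hitRight u h ∈ E

end SupportFunctional

section Support

variable {k H : Type} [Field k] [Ring H] [HopfAlgebra k H]

theorem isSubcoalgebra_ker_hitLeft {g : H →ₗ[k] k} (hg : hitLeft g = hitRight g) :
    IsSubcoalgebra k H (LinearMap.ker (hitLeft g)) := by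
  refine isSubcoalgebra_iff_hit_mem.2 fun x hx f => ⟨?_, ?_⟩
  · rw [hg, LinearMap.mem_ker] at hx ⊢
    rw [← hitLeft_hitRight, hx, map_zero]
  · rw [LinearMap.mem_ker] at hx ⊢
    rw [hitLeft_hitRight, hx, map_zero]

variable [FiniteDimensional k H]

section Projection

variable {l : H →ₗ[k] k} (hl : IsHaar l) {E : Submodule k H} (hE : IsSubcoalgebra k H E)
variable {p : H →ₗ[k] H}

include hl hE

theorem IsHaar.leftSupport_apply_of_mem (hp : ∀ x ∈ E, p x = x) {x : H} (hx : x ∈ E) :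
    leftSupport l p x = counit (R := k) x := by
  refine hE.eqOn_of_isComatrix (fun d m hm hmE i j => ?_) hx
  simp only [hm.leftSupport_apply, hp _ (hmE _ _)]
  rw [← map_sum, hm.sum_antipode_mul, hm.counit_apply]
  split_ifs <;> simp [hl.apply_one]

theorem IsHaar.rightSupport_apply_of_mem (hp : ∀ x ∈ E, p x = x) {x : H} (hx : x ∈ E) :
    rightSupport l p x = counit (R := k) x := by
  refine hE.eqOn_of_isComatrix (fun d m hm hmE i j => ?_) hx
  simp only [hm.rightSupport_apply, hp _ (hmE _ _)]
  rw [← map_sum, hm.sum_mul_antipode, hm.counit_apply]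
  split_ifs <;> simp [hl.apply_one]

theorem IsHaar.hitLeft_leftSupport_mem (hp : ∀ x, p x ∈ E) (h : H) :
    hitLeft (leftSupport l p) h ∈ E := by
  refine mem_of_forall_isComatrix (F := E.comap (hitLeft (leftSupport l p)))
    (fun d m hm i j => ?_) h
  simp only [Submodule.mem_comap, hm.hitLeft_apply, hm.leftSupport_apply, Finset.sum_smul]
  rw [Finset.sum_comm]
  simp only [hl.sum_antipode_mul_smul hm]
  exact sum_mem fun r _ => (isSubcoalgebra_iff_hit_mem.1 hE _ (hp _) _).2

theorem IsHaar.hitRight_rightSupport_mem (hp : ∀ x, p x ∈ E) (h : H) :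
    hitRight (rightSupport l p) h ∈ E := by
  refine mem_of_forall_isComatrix (F := E.comap (hitRight (rightSupport l p)))
    (fun d m hm i j => ?_) h
  simp only [Submodule.mem_comap, hm.hitRight_apply, hm.rightSupport_apply, Finset.sum_smul]
  rw [Finset.sum_comm]
  simp only [hl.sum_mul_antipode_smul hm]
  exact sum_mem fun r _ => (isSubcoalgebra_iff_hit_mem.1 hE _ (hp _) _).1

theorem IsHaar.exists_isSupport : ∃ u, IsSupport E u := by
  obtain ⟨π, hπ⟩ := E.subtype.exists_leftInverse_of_injective E.ker_subtype
  let p : H →ₗ[k] H := E.subtype ∘ₗ π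
  have hp (x : H) (hx : x ∈ E) : p x = x :=
    congr_arg Subtype.val (LinearMap.congr_fun hπ ⟨x, hx⟩)
  have hpE (x : H) : p x ∈ E := (π x).2
  have eq : leftSupport l p = rightSupport l p := LinearMap.ext fun h => by
    rw [← counit_hitLeft (leftSupport l p),
      ← hl.rightSupport_apply_of_mem hE hp (hl.hitLeft_leftSupport_mem hE hpE h), apply_hitLeft,
      hl.leftSupport_apply_of_mem hE hp (hl.hitRight_rightSupport_mem hE hpE h), counit_hitRight]
  exact ⟨leftSupport l p, fun _ => hl.leftSupport_apply_of_mem hE hp,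
    hl.hitLeft_leftSupport_mem hE hpE, eq ▸ hl.hitRight_rightSupport_mem hE hpE⟩

end Projection

namespace IsSupport

variable {E : Submodule k H} {u : H →ₗ[k] k} (hu : IsSupport E u) (hE : IsSubcoalgebra k H E)

include hu hE

theorem hitLeft_apply_of_mem {x : H} (hx : x ∈ E) : hitLeft u x = x := by
  conv_rhs => rw [← LinearMap.id_apply (R := k) x, ← hitLeft_counit]
  refine hE.eqOn_of_isComatrix (fun d m hm hmE i j => ?_) hx
  simp only [hm.hitLeft_apply, hu.apply_eq _ (hmE _ _)]

theorem hitRight_apply_of_mem {x : H} (hx : x ∈ E) : hitRight u x = x := by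
  conv_rhs => rw [← LinearMap.id_apply (R := k) x, ← hitRight_counit]
  refine hE.eqOn_of_isComatrix (fun d m hm hmE i j => ?_) hx
  simp only [hm.hitRight_apply, hu.apply_eq _ (hmE _ _)]

theorem hitLeft_eq_hitRight : hitLeft u = hitRight u := by
  ext h
  rw [← hu.hitLeft_apply_of_mem hE (hu.hitRight_mem h), hitLeft_hitRight,
    hu.hitRight_apply_of_mem hE (hu.hitLeft_mem h)]

end IsSupport

-- The support of the sum `M` of the simple subcoalgebras splits `L` as `M ⊕ N` with `N` a
-- subcoalgebra, and `N` contains no simple subcoalgebra.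
theorem IsHaar.le_sSup_isSimpleSubcoalgebra {l : H →ₗ[k] k} (hl : IsHaar l) {L : Submodule k H}
    (hL : IsSubcoalgebra k H L) : L ≤ sSup {D | IsSimpleSubcoalgebra k H D ∧ D ≤ L} := by
  set M := sSup {D | IsSimpleSubcoalgebra k H D ∧ D ≤ L}
  have hM : IsSubcoalgebra k H M := isSubcoalgebra_sSup fun D hD => hD.1.1
  have hML : M ≤ L := sSup_le fun D hD => hD.2
  obtain ⟨u, hu⟩ := hl.exists_isSupport hM
  have inf_ker_eq_bot : L ⊓ LinearMap.ker (hitLeft u) = ⊥ := by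
    by_contra hne
    have hN := hL.inf (isSubcoalgebra_ker_hitLeft (hu.hitLeft_eq_hitRight hM))
    obtain ⟨D, hDN, hD⟩ := hN.exists_isSimpleSubcoalgebra_le hne
    have hDM : D ≤ M := le_sSup ⟨hD, hDN.trans inf_le_left⟩
    refine hD.2.1 ((Submodule.eq_bot_iff _).2 fun x hx => ?_)
    rw [← hu.hitLeft_apply_of_mem hM (hDM hx)]
    exact (hDN hx).2
  intro x hx
  have sub_mem_ker : x - hitLeft u x ∈ L ⊓ LinearMap.ker (hitLeft u) := by
    refine ⟨sub_mem hx (hML (hu.hitLeft_mem x)), ?_⟩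
    rw [SetLike.mem_coe, LinearMap.mem_ker, map_sub,
      hu.hitLeft_apply_of_mem hM (hu.hitLeft_mem x), sub_self]
  rw [inf_ker_eq_bot, Submodule.mem_bot, sub_eq_zero] at sub_mem_ker
  rw [sub_mem_ker]
  exact hu.hitLeft_mem x

end Support

section ComplementOfSupport

theorem eq_zero_of_isIdempotentElem_of_trace_eq_zero {k ι : Type*} [Field k] [CharZero k]
    [Fintype ι] {A : Matrix ι ι k} (hA : IsIdempotentElem A)
    (htr : A.trace = 0) : A = 0 := by
  classical
  have hlin : IsIdempotentElem (Matrix.toLin' A) := by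
    rw [IsIdempotentElem, Module.End.mul_eq_comp, ← Matrix.toLin'_mul, hA.eq]
  rw [← Matrix.trace_toLin'_eq] at htr
  exact (LinearEquiv.map_eq_zero_iff _).1
    ((LinearMap.IsIdempotentElem.trace_eq_zero_iff hlin).1 htr)

theorem IsComatrix.isIdempotentElem_map {R A : Type*} [CommSemiring R] [AddCommMonoid A]
    [Module R A] [Coalgebra R A] {ι : Type*} [Fintype ι] [DecidableEq ι] {m : Matrix ι ι A}
    (hm : IsComatrix R m) {e : A →ₗ[R] R} (he : ∀ x, e (hitLeft e x) = e x) :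
    IsIdempotentElem (m.map e) := by
  ext i j
  simp [Matrix.mul_apply, ← he (m i j), hm.hitLeft_apply, mul_comm]

theorem hitLeft_sub {R A : Type*} [CommRing R] [AddCommGroup A] [Module R A] [Coalgebra R A]
    (f g : A →ₗ[R] R) : hitLeft (f - g) = hitLeft f - hitLeft g := by
  ext h
  simp [hitLeft, evalSnd, LinearMap.lTensor_sub]

theorem hitRight_sub {R A : Type*} [CommRing R] [AddCommGroup A] [Module R A] [Coalgebra R A]
    (f g : A →ₗ[R] R) : hitRight (f - g) = hitRight f - hitRight g := by
  ext h
  simp [hitRight, evalFst, LinearMap.rTensor_sub]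

theorem hitLeft_counit_sub_apply {R A : Type*} [CommRing R] [AddCommGroup A] [Module R A]
    [Coalgebra R A] (f : A →ₗ[R] R) (h : A) : hitLeft (counit - f) h = h - hitLeft f h := by
  rw [hitLeft_sub, hitLeft_counit, LinearMap.sub_apply, LinearMap.id_apply]

theorem hitRight_counit_sub_apply {R A : Type*} [CommRing R] [AddCommGroup A] [Module R A]
    [Coalgebra R A] (f : A →ₗ[R] R) (h : A) : hitRight (counit - f) h = h - hitRight f h := by
  rw [hitRight_sub, hitRight_counit, LinearMap.sub_apply, LinearMap.id_apply]

theorem IsComatrix.sum_mul_antipode_swap {R H : Type*} [CommSemiring R] [Semiring H]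
    [HopfAlgebra R H] {ι : Type*} [Fintype ι] [DecidableEq ι] {m : Matrix ι ι H}
    (hm : IsComatrix R m) (hS : ∀ x : H, antipode R (antipode R x) = x) (i j : ι) :
    ∑ p, m p j * antipode R (m i p) = if i = j then 1 else 0 := by
  have h := congr_arg (antipode R) (hm.sum_mul_antipode i j)
  simpa [antipode_mul_antidistrib, hS, apply_ite (antipode R (A := H))] using h

section Support

variable {k H : Type*} [Field k] [Ring H] [HopfAlgebra k H]
variable {E : Submodule k H} {u : H →ₗ[k] k}

namespace IsSupport

theorem counit_sub_apply (hu : IsSupport E u) {x : H} (hx : x ∈ E) :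
    ((counit : H →ₗ[k] k) - u) x = 0 := by
  rw [LinearMap.sub_apply, hu.apply_eq x hx, sub_self]

theorem counit_sub_hitLeft_mul (hu : IsSupport E u) {a : H} (ha : ∀ y ∈ E, y * a ∈ E) (h : H) :
    ((counit : H →ₗ[k] k) - u) (hitLeft (counit - u) h * a) =
      ((counit : H →ₗ[k] k) - u) (h * a) := by
  rw [hitLeft_counit_sub_apply, sub_mul, map_sub, hu.counit_sub_apply (ha _ (hu.hitLeft_mem h)),
    sub_zero]

theorem counit_sub_hitRight_mul (hu : IsSupport E u) {a : H} (ha : ∀ y ∈ E, y * a ∈ E) (h : H) :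
    ((counit : H →ₗ[k] k) - u) (hitRight (counit - u) h * a) =
      ((counit : H →ₗ[k] k) - u) (h * a) := by
  rw [hitRight_counit_sub_apply, sub_mul, map_sub, hu.counit_sub_apply (ha _ (hu.hitRight_mem h)),
    sub_zero]

-- The trace being the rank, the idempotent matrix `(ε - u)(mᵢⱼ)` vanishes.
theorem apply_mem_of_counit_sub_trace_eq_zero [CharZero k] (hu : IsSupport E u) {ι : Type*}
    [Fintype ι] [DecidableEq ι] {m : Matrix ι ι H} (hm : IsComatrix k m)
    (htr : ((counit : H →ₗ[k] k) - u) m.trace = 0) (i j : ι) : m i j ∈ E := by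
  have hidem : IsIdempotentElem (m.map ((counit : H →ₗ[k] k) - u)) :=
    hm.isIdempotentElem_map fun x => by
      simpa using hu.counit_sub_hitLeft_mul (a := 1) (by simp) x
  have hzero : m.map ((counit : H →ₗ[k] k) - u) = 0 :=
    eq_zero_of_isIdempotentElem_of_trace_eq_zero hidem
      ((map_sum _ _ _).symm.trans htr)
  have hhit : hitLeft ((counit : H →ₗ[k] k) - u) (m i j) = 0 := by
    rw [hm.hitLeft_apply]
    exact Finset.sum_eq_zero fun l _ =>
      (congr_arg (· • m i l) (congr_fun₂ hzero l j)).trans (zero_smul k _)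
  rw [hitLeft_counit_sub_apply, sub_eq_zero] at hhit
  rw [hhit]
  exact hu.hitLeft_mem _

end IsSupport

end Support

variable {k H : Type} [Field k] [Ring H] [HopfAlgebra k H] [FiniteDimensional k H]

theorem IsSupport.counit_sub_mul {K : Subalgebra k H} (hK : IsHopfSubalgebra k H K)
    (hS : ∀ x : H, antipode k (antipode k x) = x) {E : Submodule k H}
    (hEK : ∀ x ∈ K, ∀ y ∈ E, y * x ∈ E) {u : H →ₗ[k] k} (hu : IsSupport E u) (h : H)
    {x : H} (hx : x ∈ K) : ((counit : H →ₗ[k] k) - u) (h * x) =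
      ((counit : H →ₗ[k] k) - u) h * counit (R := k) x := by
  set e : H →ₗ[k] k := counit - u
  refine hK.1.eqOn_of_isComatrix (f := e ∘ₗ LinearMap.mulLeft k h) (g := e h • counit)
    (fun d m hm hmK i j => ?_) hx
  calc e (h * m i j) = e (hitLeft (e ∘ₗ LinearMap.mulRight k (m i j)) h) := by
        rw [apply_hitLeft]
        exact (hu.counit_sub_hitRight_mul (hEK _ (hmK i j)) h).symm
    _ = ∑ q, e (hitLeft (e ∘ₗ LinearMap.mulRight k (m q j)) h *
          ∑ p, m p q * antipode k (m i p)) := by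
        simp [hm.sum_mul_antipode_swap hS, apply_ite e]
    _ = ∑ p, e (hitLeft e (h * m p j) * antipode k (m i p)) := by
        simp only [← evalSnd_comul e, Bialgebra.comul_mul, hm.comul_apply, Finset.mul_sum,
          map_sum, evalSnd_mul_tmul, Finset.sum_mul, evalSnd_comul, mul_assoc]
        exact Finset.sum_comm
    _ = e (h * ∑ p, m p j * antipode k (m i p)) := by
        simp only [e, hu.counit_sub_hitLeft_mul (hEK _ (hK.2 _ (hmK _ _))), Finset.mul_sum,
          map_sum, mul_assoc]
    _ = e h * counit (R := k) (m i j) := by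
        rw [hm.sum_mul_antipode_swap hS, hm.counit_apply]
        split_ifs <;> simp

theorem IsHaar.mul_le_of_integral_eq [CharZero k] {l : H →ₗ[k] k} (hl : IsHaar l)
    (hS : ∀ x : H, antipode k (antipode k x) = x) {K : Subalgebra k H}
    (hK : IsHopfSubalgebra k H K) {Λ : H} (hΛ : IsIdempotentIntegral k H K Λ)
    {C D : Submodule k H} (hC : IsSubcoalgebra k H C) (hD : IsSubcoalgebra k H D)
    (h : ∀ d ∈ D, IsCocomm k H d → ∀ c ∈ C, IsCocomm k H c →
      d * (c * Λ) = counit (R := k) d • (c * Λ)) :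
    D * C ≤ C * K.toSubmodule := by
  have hEK (x) (hx : x ∈ K) (y) (hy : y ∈ C * K.toSubmodule) : y * x ∈ C * K.toSubmodule := by
    rw [← K.isIdempotentElem_toSubmodule.eq, ← mul_assoc]
    exact Submodule.mul_mem_mul hy hx
  obtain ⟨u, hu⟩ := hl.exists_isSupport (hC.mul hK.1)
  obtain ⟨a, m, hm, hmD, hD'⟩ := exists_isComatrix_span hD
  obtain ⟨b, n, hn, hnC, hC'⟩ := exists_isComatrix_span hC
  have hmt : m.trace ∈ D := sum_mem fun i _ => hmD i i
  have hnt : n.trace ∈ C := sum_mem fun i _ => hnC i i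
  have trace_mul : ((counit : H →ₗ[k] k) - u) (m.trace * n.trace) = 0 := by
    have hmul := hu.counit_sub_mul hK hS hEK (m.trace * n.trace) hΛ.1
    rw [hΛ.2.1, mul_one] at hmul
    rw [← hmul, mul_assoc, h _ hmt hm.isCocomm_trace _ hnt hn.isCocomm_trace, map_smul,
      hu.counit_sub_apply (Submodule.mul_mem_mul hnt hΛ.1), smul_zero]
  have trace_kronecker : Matrix.trace (.of fun x y : Fin a × Fin b => m x.1 y.1 * n x.2 y.2) =
      m.trace * n.trace := by
    simp [Matrix.trace, Finset.sum_mul_sum, Fintype.sum_prod_type]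
  rw [hD', hC', Submodule.span_mul_span, Submodule.span_le, ← hC']
  rintro _ ⟨_, ⟨⟨i, j⟩, rfl⟩, _, ⟨⟨p, q⟩, rfl⟩, rfl⟩
  exact hu.apply_mem_of_counit_sub_trace_eq_zero (hm.kronecker hn)
    (by rw [trace_kronecker, trace_mul]) (i, p) (j, q)

end ComplementOfSupport

section CentralAverage

section Kernel

variable {k H : Type*} [Field k] [Ring H] [HopfAlgebra k H]

/-- The average `h ↦ l(h₁ S(h₃)) f(h₂)` of a functional `f` under the coadjoint action, with
respect to a Haar functional `l`. -/
def centralAverage (l f : H →ₗ[k] k) : H →ₗ[k] k :=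
  l ∘ₗ LinearMap.mul' k H ∘ₗ (antipode k ∘ₗ hitRight f).lTensor H ∘ₗ comul

variable {ι κ : Type*} [Fintype ι] [DecidableEq ι] [Fintype κ] [DecidableEq κ]
variable {m : Matrix ι ι H} {n : Matrix κ κ H}

theorem IsComatrix.centralAverage_apply (hm : IsComatrix k m) (l f : H →ₗ[k] k) (i j : ι) :
    centralAverage l f (m i j) = ∑ p, ∑ q, f (m p q) * l (m i p * antipode k (m q j)) := by
  simp [centralAverage, hm.comul_apply, hm.hitRight_apply, Finset.mul_sum]

theorem IsComatrix.sum_mul_mul_antipode_mul (hn : IsComatrix k n) (x y : H) (s t : κ) :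
    ∑ a, x * n s a * antipode k (y * n a t) =
      counit (R := k) (n s t) • (x * antipode k y) := by
  calc _ = x * (∑ a, n s a * antipode k (n a t)) * antipode k y := by
        simp only [antipode_mul_antidistrib, Finset.mul_sum, Finset.sum_mul, mul_assoc]
    _ = _ := by
        rw [hn.sum_mul_antipode, hn.counit_apply]
        split_ifs <;> simp

theorem IsComatrix.centralAverage_mul (hm : IsComatrix k m) (hn : IsComatrix k n)
    (l : H →ₗ[k] k) {f : H →ₗ[k] k}
    (hf : ∀ h a b, f (h * n a b) = f h * counit (R := k) (n a b)) (i j : ι) (s t : κ) :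
    centralAverage l f (m i j * n s t) =
      centralAverage l f (m i j) * counit (R := k) (n s t) := by
  calc centralAverage l f (m i j * n s t)
    _ = ∑ p, ∑ a, ∑ q, ∑ b, f (m p q * n a b) *
          l (m i p * n s a * antipode k (m q j * n b t)) :=
        ((hm.kronecker hn).centralAverage_apply l f (i, s) (j, t)).trans
          (by simp only [Fintype.sum_prod_type, Matrix.of_apply])
    _ = ∑ p, ∑ q, f (m p q) * l (∑ a, m i p * n s a * antipode k (m q j * n a t)) := by
        refine Finset.sum_congr rfl fun p _ => Finset.sum_comm.trans ?_
        simp [hf, hn.counit_apply, Finset.mul_sum]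
    _ = centralAverage l f (m i j) * counit (R := k) (n s t) := by
        simp only [hn.sum_mul_mul_antipode_mul, hm.centralAverage_apply, map_smul, smul_eq_mul,
          Finset.sum_mul]
        simp only [mul_comm, mul_left_comm]

variable [FiniteDimensional k H] {l : H →ₗ[k] k}

theorem IsHaar.hitLeft_centralAverage (hl : IsHaar l) (f : H →ₗ[k] k) :
    hitLeft (centralAverage l f) = hitRight (centralAverage l f) := by
  refine linearMap_ext_isComatrix fun d m hm i j => ?_
  have sum_eq (p q : Fin d) : ∑ r, l (m r p * antipode k (m q j)) • m i r =
      ∑ r, l (m i p * antipode k (m q r)) • m r j := by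
    rw [hl.sum_mul_antipode_smul hm, hm.hitLeft_apply]
    rfl
  calc hitLeft (centralAverage l f) (m i j)
    _ = ∑ p, ∑ q, f (m p q) • ∑ r, l (m r p * antipode k (m q j)) • m i r := by
        simp only [hm.hitLeft_apply, hm.centralAverage_apply, Finset.sum_smul, mul_smul,
          Finset.smul_sum]
        exact Finset.sum_comm.trans (Finset.sum_congr rfl fun p _ => Finset.sum_comm)
    _ = ∑ p, ∑ q, f (m p q) • ∑ r, l (m i p * antipode k (m q r)) • m r j := by
        simp only [sum_eq]
    _ = hitRight (centralAverage l f) (m i j) := by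
        simp only [hm.hitRight_apply, hm.centralAverage_apply, Finset.sum_smul, mul_smul,
          Finset.smul_sum]
        exact (Finset.sum_congr rfl fun p _ => Finset.sum_comm).trans Finset.sum_comm

end Kernel

variable {k H : Type} [Field k] [Ring H] [HopfAlgebra k H] [FiniteDimensional k H]
variable {l f : H →ₗ[k] k}

-- Cyclic invariance of the legs of `z` turns `l(z₁ S(z₃)) f(z₂)` into `l(z₃ S(z₂)) f(z₁)`, and
-- `z₂ S(z₁) = ε(z)` because `S² = 1`.
theorem IsHaar.centralAverage_apply_of_isCocomm (hl : IsHaar l)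
    (hS : ∀ x : H, antipode k (antipode k x) = x) (f : H →ₗ[k] k) {z : H}
    (hz : IsCocomm k H z) : centralAverage l f z = f z := by
  have hcomm : l ∘ₗ LinearMap.mul' k H ∘ₗ (antipode k ∘ₗ hitRight f).lTensor H ∘ₗ
      (TensorProduct.comm k H H).toLinearMap ∘ₗ comul = f := by
    refine linearMap_ext_isComatrix fun d m hm i j => ?_
    simp only [LinearMap.comp_apply, hm.comul_apply, map_sum, LinearEquiv.coe_coe,
      TensorProduct.comm_tmul, LinearMap.lTensor_tmul, hm.hitRight_apply, map_smul,
      LinearMap.mul'_apply, Finset.mul_sum, mul_smul_comm]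
    rw [Finset.sum_comm]
    simp only [← Finset.smul_sum, ← map_sum, hm.sum_mul_antipode_swap hS]
    simp [apply_ite l, hl.apply_one]
  conv_rhs => rw [← hcomm]
  simp only [centralAverage, LinearMap.comp_apply, LinearEquiv.coe_coe]
  rw [hz]

theorem IsSubcoalgebra.centralAverage_mul {K : Submodule k H} (hK : IsSubcoalgebra k H K)
    (l : H →ₗ[k] k) (hf : ∀ h, ∀ x ∈ K, f (h * x) = f h * counit (R := k) x) (h : H) {x : H}
    (hx : x ∈ K) : centralAverage l f (h * x) = centralAverage l f h * counit (R := k) x := by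
  refine hK.eqOn_of_isComatrix (f := centralAverage l f ∘ₗ LinearMap.mulLeft k h)
    (g := centralAverage l f h • counit) (fun e n hn hnK s t => ?_) hx
  suffices hlin : centralAverage l f ∘ₗ LinearMap.mulRight k (n s t) =
      counit (R := k) (n s t) • centralAverage l f by
    simpa [mul_comm] using LinearMap.congr_fun hlin h
  refine linearMap_ext_isComatrix fun d m hm i j => ?_
  simpa [mul_comm] using
    hm.centralAverage_mul hn l (fun h a b => hf h _ (hnK a b)) i j s t

-- Schur's lemma: an eigenspace of `h ↦ h₁ g(h₂)` on `C` is a subcoalgebra, hence all of `C`.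
theorem IsSimpleSubcoalgebra.exists_eq_mul_counit [IsAlgClosed k] {C : Submodule k H}
    (hC : IsSimpleSubcoalgebra k H C) {g : H →ₗ[k] k} (hg : hitLeft g = hitRight g) :
    ∃ β : k, ∀ x ∈ C, g x = β * counit (R := k) x := by
  have : Nontrivial C := Submodule.nontrivial_iff_ne_bot.2 hC.2.1
  let T : Module.End k C :=
    (hitLeft g).restrict fun x hx => (isSubcoalgebra_iff_hit_mem.1 hC.1 x hx g).1
  obtain ⟨β, hβ⟩ := Module.End.exists_eigenvalue T
  obtain ⟨w, hw, hw0⟩ := hβ.exists_hasEigenvector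
  let W : Submodule k H := C ⊓ LinearMap.ker (hitLeft (g - β • counit))
  have hit_apply (x : H) : hitLeft (g - β • counit) x = hitLeft g x - β • x := by
    simp [hitLeft_sub, hitLeft_smul]
  have isSubcoalgebra_W : IsSubcoalgebra k H W :=
    hC.1.inf (isSubcoalgebra_ker_hitLeft (by
      simp only [hitLeft_sub, hitRight_sub, hitLeft_smul, hitRight_smul, hg, hitLeft_counit,
        hitRight_counit]))
  have w_mem : (w : H) ∈ W := ⟨w.2, LinearMap.mem_ker.2 <| (hit_apply w).trans <|
    sub_eq_zero.2 (congr_arg Subtype.val (Module.End.mem_eigenspace_iff.1 hw))⟩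
  have W_eq : W = C := hC.2.2 W inf_le_left isSubcoalgebra_W
    ((Submodule.ne_bot_iff _).2 ⟨w, w_mem, fun h => hw0 (Subtype.ext h)⟩)
  refine ⟨β, fun x hx => ?_⟩
  have hx0 : hitLeft (g - β • counit) x = 0 := (W_eq ▸ hx : x ∈ W).2
  rw [hit_apply, sub_eq_zero] at hx0
  rw [← counit_hitLeft, hx0, map_smul, smul_eq_mul]

variable [IsAlgClosed k] {K C : Submodule k H}

theorem IsHaar.apply_mul_of_mul_mem (hl : IsHaar l)
    (hS : ∀ x : H, antipode k (antipode k x) = x) (hK : IsSubcoalgebra k H K)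
    (hf : ∀ h, ∀ x ∈ K, f (h * x) = f h * counit (R := k) x)
    (hC : IsSimpleSubcoalgebra k H C) {c d : H} (hc : c ∈ C) (hcc : IsCocomm k H c)
    (hdc : IsCocomm k H d) (hmem : d * c ∈ C * K) :
    f (d * c) = counit (R := k) d * f c := by
  obtain ⟨β, hβ⟩ := hC.exists_eq_mul_counit (hl.hitLeft_centralAverage f)
  have average_eq (z : H) (hz : z ∈ C * K) :
      centralAverage l f z = β * counit (R := k) z := by
    induction hz using Submodule.mul_induction_on' with
    | mem_mul_mem y hy x hx =>
      rw [hK.centralAverage_mul l hf y hx, hβ y hy, Bialgebra.counit_mul, mul_assoc]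
    | add x _ y _ hx hy => rw [map_add, map_add, hx, hy, mul_add]
  calc f (d * c) = β * counit (R := k) (d * c) := by
        rw [← hl.centralAverage_apply_of_isCocomm hS f (hdc.mul hcc), average_eq _ hmem]
    _ = counit (R := k) d * (β * counit (R := k) c) := by
        rw [Bialgebra.counit_mul, mul_left_comm]
    _ = counit (R := k) d * f c := by
        rw [← hβ c hc, hl.centralAverage_apply_of_isCocomm hS f hcc]

theorem IsHaar.integral_eq_of_mul_mem (hl : IsHaar l)
    (hS : ∀ x : H, antipode k (antipode k x) = x) (hK : IsSubcoalgebra k H K) {Λ : H}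
    (hΛ : ∀ x ∈ K, x * Λ = counit (R := k) x • Λ) (hC : IsSimpleSubcoalgebra k H C) {c d : H}
    (hc : c ∈ C) (hcc : IsCocomm k H c) (hdc : IsCocomm k H d) (hmem : d * c ∈ C * K) :
    d * (c * Λ) = counit (R := k) d • (c * Λ) := by
  refine sub_eq_zero.1 ((Module.forall_dual_apply_eq_zero_iff k _).1 fun φ => ?_)
  have hφ := hl.apply_mul_of_mul_mem (f := φ ∘ₗ LinearMap.mulRight k Λ) hS hK
    (fun h x hx => by simp [mul_assoc, hΛ x hx, mul_comm]) hC hc hcc hdc hmem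
  simpa [mul_assoc, sub_eq_zero] using hφ

end CentralAverage

variable (k : Type) [Field k] [CharZero k] [IsAlgClosed k]
variable (H : Type) [Ring H] [HopfAlgebra k H]

section Statements

variable [FiniteDimensional k H] [IsSemisimpleRing H]

theorem statement_12_general (K : Subalgebra k H) (hK : IsHopfSubalgebra k H K)
    (Λ : H) (hΛ : IsIdempotentIntegral k H K Λ)
    (C : Submodule k H) (hC : IsSimpleSubcoalgebra k H C) :
    conjK k H K Λ C * C ≤ C * K.toSubmodule ∧
    ∀ L : Submodule k H, IsSubcoalgebra k H L → L * C ≤ C * K.toSubmodule →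
      L ≤ conjK k H K Λ C := by
  obtain ⟨l, hl⟩ := exists_isHaar k H
  obtain ⟨Γ, hΓ⟩ := exists_isNormalizedIntegral k H
  have hS : ∀ x : H, antipode k (antipode k x) = x :=
    DFunLike.congr_fun (hΓ.antipodeSq_eq_id antipodeSqTrace_one_ne_zero)
  refine ⟨?_, fun L hL hLC => (hl.le_sSup_isSimpleSubcoalgebra hL).trans (sSup_le_sSup ?_)⟩
  · rw [conjK, sSup_eq_iSup', Submodule.iSup_mul]
    exact iSup_le fun D => hl.mul_le_of_integral_eq hS hK hΛ hC.1 D.2.1.1 D.2.2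
  · rintro D ⟨hD, hDL⟩
    exact ⟨hD, fun d hd hdc c hc hcc => hl.integral_eq_of_mul_mem hS hK.1
      (fun x hx => (hΛ.2.2 x hx).1) hC hc hcc hdc (hLC (Submodule.mul_mem_mul (hDL hd) hc))⟩

/-- Theorem 33: `ᶜK` is the largest Hopf subalgebra `L` of `H`
with `L·C ⊆ C·K`; that is, `ᶜK·C ⊆ C·K` and every Hopf subalgebra `L` of `H`
with `L·C ⊆ C·K` satisfies `L ⊆ ᶜK`. -/
theorem statement_12 (K : Subalgebra k H) (hK : IsHopfSubalgebra k H K)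
    (Λ : H) (hΛ : IsIdempotentIntegral k H K Λ)
    (C : Submodule k H) (hC : IsSimpleSubcoalgebra k H C) :
    conjK k H K Λ C * C ≤ C * K.toSubmodule ∧
    ∀ L : Subalgebra k H, IsHopfSubalgebra k H L →
      L.toSubmodule * C ≤ C * K.toSubmodule →
      L.toSubmodule ≤ conjK k H K Λ C :=
  have ⟨hle, hmax⟩ := statement_12_general k H K hK Λ hΛ C hC
  ⟨hle, fun L hL => hmax L.toSubmodule hL.1⟩

end Statements

end

end MackeyPaper
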